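/- A discrete group G is C*-simple if and only if G has no subgroup that is both amenable and recurrent. -/

import Mathlib

noncomputable section
open scoped ENNReal ComplexOrder lp
open MeasureTheory
set_option maxHeartbeats 1000000
set_option synthInstance.maxHeartbeats 1000000

universe u

variable {G : Type u} [Group G]

theorem translat_mem (g : G) (f : ℓ²(G, ℂ)) : Memℓp (fun h => f (g⁻¹ * h)) 2 := by
  have hf : Summable fun i : G => ‖f i‖ ^ (2 : ℝ≥0∞).toReal :=
    (memℓp_gen_iff (by norm_num)).1 (lp.memℓp f)
  exact memℓp_gen ((Equiv.mulLeft g⁻¹).summable_iff.2 hf)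

/-- The left regular representation of `g ∈ G` as a linear isometric bijection of `ℓ²(G)`,
given by `(λ_g ξ)(h) = ξ(g⁻¹ h)`. -/
def lregE (g : G) : ℓ²(G, ℂ) ≃ₗᵢ[ℂ] ℓ²(G, ℂ) :=
{ toFun := fun f => ⟨fun h => f (g⁻¹ * h), translat_mem g f⟩
  invFun := fun f => ⟨fun h => f (g * h), by
    have := translat_mem g⁻¹ f; simp only [inv_inv] at this; exact this⟩
  map_add' := by intro f₁ f₂; ext h; simp [lp.coeFn_add]; rfl
  map_smul' := by intro c f; ext h; simp [lp.coeFn_smul]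
  left_inv := by intro f; ext h; simp
  right_inv := by intro f; ext h; simp
  norm_map' := by
    intro f
    rw [lp.norm_eq_tsum_rpow (by norm_num) f, lp.norm_eq_tsum_rpow (by norm_num)]
    congr 1
    exact (Equiv.mulLeft g⁻¹).tsum_eq (fun h => ‖f h‖ ^ (2 : ℝ≥0∞).toReal) }

/-- The left regular representation `λ` as bounded operators on `ℓ²(G)`. -/
def lreg (g : G) : ℓ²(G, ℂ) →L[ℂ] ℓ²(G, ℂ) :=
  (lregE g).toContinuousLinearEquiv.toContinuousLinearMap

variable (G) in
/-- The reduced group C*-algebra `C*_λ(G)`: the norm-closed star subalgebra of the algebra of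
bounded operators on `ℓ²(G)` generated by the image of the left regular representation. -/
def redCstar : StarSubalgebra ℂ (ℓ²(G, ℂ) →L[ℂ] ℓ²(G, ℂ)) :=
  (StarAlgebra.adjoin ℂ (Set.range (lreg (G := G)))).topologicalClosure

variable (G) in
/-- `G` is C*-simple: `C*_λ(G)` has no closed two-sided ideals other than `{0}` and the
whole algebra. -/
def IsCstarSimple : Prop :=
  ∀ I : TwoSidedIdeal (redCstar G), IsClosed (I : Set (redCstar G)) → I = ⊥ ∨ I = ⊤

attribute [irreducible] redCstar lreg lregE

variable (G) in
/-- The Chabauty topology on the space of subgroups of `G`: the topology induced from the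
product topology on `{0,1}^G` by identifying a subgroup with its indicator function. -/
def chabauty : TopologicalSpace (Subgroup G) :=
  letI : ∀ p : Prop, Decidable p := Classical.propDecidable
  TopologicalSpace.induced (fun (H : Subgroup G) (g : G) => decide (g ∈ H))
    (inferInstance : TopologicalSpace (G → Bool))

attribute [instance] chabauty

/-- The conjugate subgroup `gHg⁻¹`. -/
def conjSub (g : G) (H : Subgroup G) : Subgroup G :=
  H.map (MulAut.conj g).toMonoidHom

/-- `H` is a recurrent subgroup of `G`: the trivial subgroup does not belong to the Chabauty
closure of the set of conjugates of `H`. -/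
def IsRecurrent (H : Subgroup G) : Prop :=
  (⊥ : Subgroup G) ∉ closure {K : Subgroup G | ∃ g : G, K = conjSub g H}

/-- Left translation of a bounded function on a group `H`. -/
def translInfty {H : Type*} [Group H] (h : H) (f : lp (fun _ : H => ℝ) ∞) :
    lp (fun _ : H => ℝ) ∞ :=
  ⟨fun k => f (h⁻¹ * k), by
    apply memℓp_infty
    have : (Set.range fun k => ‖f (h⁻¹ * k)‖) = Set.range fun k => ‖f k‖ :=
      (Equiv.mulLeft h⁻¹).surjective.range_comp (fun k => ‖f k‖)
    rw [this]
    exact memℓp_infty_iff.1 (lp.memℓp f)⟩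

/-- A group `H` is amenable: there exists a left-invariant mean on `ℓ∞(H)`, i.e. a unital
positive linear functional invariant under left translation. -/
def IsAmenable (H : Type*) [Group H] : Prop :=
  ∃ m : lp (fun _ : H => ℝ) ∞ →ₗ[ℝ] ℝ,
    m 1 = 1 ∧ (∀ f : lp (fun _ : H => ℝ) ∞, (∀ k, 0 ≤ f k) → 0 ≤ m f) ∧
      ∀ (h : H) (f : lp (fun _ : H => ℝ) ∞), m (translInfty h f) = m f


section Means
open Set

/-- Bounded real functions. -/
def Bd {Ω : Type*} (f : Ω → ℝ) : Prop := ∃ C : ℝ, ∀ ω, |f ω| ≤ C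

theorem Bd.add {Ω : Type*} {f g : Ω → ℝ} (hf : Bd f) (hg : Bd g) : Bd (fun ω => f ω + g ω) := by
  obtain ⟨C, hC⟩ := hf
  obtain ⟨D, hD⟩ := hg
  exact ⟨C + D, fun ω => (abs_add_le _ _).trans (add_le_add (hC ω) (hD ω))⟩

theorem Bd.mul {Ω : Type*} {f g : Ω → ℝ} (hf : Bd f) (hg : Bd g) : Bd (fun ω => f ω * g ω) := by
  obtain ⟨C, hC⟩ := hf
  obtain ⟨D, hD⟩ := hg
  refine ⟨C * D, fun ω => ?_⟩
  rw [abs_mul]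
  exact mul_le_mul (hC ω) (hD ω) (abs_nonneg _) ((abs_nonneg _).trans (hC ω))

theorem Bd.const {Ω : Type*} (c : ℝ) : Bd (fun _ : Ω => c) := ⟨|c|, fun _ => le_rfl⟩

theorem Bd.smul {Ω : Type*} {f : Ω → ℝ} (c : ℝ) (hf : Bd f) : Bd (fun ω => c * f ω) :=
  (Bd.const c).mul hf

theorem Bd.neg {Ω : Type*} {f : Ω → ℝ} (hf : Bd f) : Bd (fun ω => - f ω) := by
  obtain ⟨C, hC⟩ := hf
  exact ⟨C, fun ω => by rw [abs_neg]; exact hC ω⟩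

theorem Bd.sub {Ω : Type*} {f g : Ω → ℝ} (hf : Bd f) (hg : Bd g) : Bd (fun ω => f ω - g ω) := by
  simpa [sub_eq_add_neg] using hf.add hg.neg

theorem Bd.comp {Ω Ω' : Type*} {f : Ω → ℝ} (hf : Bd f) (s : Ω' → Ω) : Bd (fun ω => f (s ω)) := by
  obtain ⟨C, hC⟩ := hf
  exact ⟨C, fun ω => hC _⟩

/-- Means on bounded functions, extended by zero to unbounded functions. -/
structure IsMean {Ω : Type*} (m : (Ω → ℝ) → ℝ) : Prop where
  add : ∀ f g, Bd f → Bd g → m (fun ω => f ω + g ω) = m f + m g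
  smul : ∀ (c : ℝ) f, Bd f → m (fun ω => c * f ω) = c * m f
  nonneg : ∀ f, Bd f → (∀ ω, 0 ≤ f ω) → 0 ≤ m f
  one : m (fun _ => 1) = 1
  junk : ∀ f, ¬ Bd f → m f = 0

namespace IsMean
variable {Ω : Type*} {m : (Ω → ℝ) → ℝ}

theorem const (hm : IsMean m) (c : ℝ) : m (fun _ => c) = c := by
  have := hm.smul c _ (Bd.const 1)
  simpa [hm.one] using this

theorem sub (hm : IsMean m) {f g : Ω → ℝ} (hf : Bd f) (hg : Bd g) :
    m (fun ω => f ω - g ω) = m f - m g := by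
  have h1 := hm.smul (-1) g hg
  have h2 := hm.add f (fun ω => -1 * g ω) hf (hg.smul _)
  rw [h1] at h2
  have : (fun ω => f ω - g ω) = fun ω => f ω + -1 * g ω := by funext ω; ring
  rw [this, h2]; ring

theorem mono (hm : IsMean m) {f g : Ω → ℝ} (hf : Bd f) (hg : Bd g) (h : ∀ ω, f ω ≤ g ω) :
    m f ≤ m g := by
  have := hm.nonneg _ (hg.sub hf) (fun ω => sub_nonneg.2 (h ω))
  rw [hm.sub hg hf] at this
  linarith

theorem abs_le (hm : IsMean m) {f : Ω → ℝ} {C : ℝ} (h : ∀ ω, |f ω| ≤ C) : |m f| ≤ C := by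
  have hf : Bd f := ⟨C, h⟩
  rw [_root_.abs_le]
  constructor
  · have := hm.mono (Bd.const (-C)) hf (fun ω => (_root_.abs_le.1 (h ω)).1)
    rwa [hm.const] at this
  · have := hm.mono hf (Bd.const C) (fun ω => (_root_.abs_le.1 (h ω)).2)
    rwa [hm.const] at this

theorem sum (hm : IsMean m) {ι : Type*} (S : Finset ι) (f : ι → Ω → ℝ) (hf : ∀ i, Bd (f i)) :
    Bd (fun ω => ∑ i ∈ S, f i ω) ∧ m (fun ω => ∑ i ∈ S, f i ω) = ∑ i ∈ S, m (f i) := by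
  classical
  induction S using Finset.induction_on with
  | empty => simpa using ⟨Bd.const 0, hm.const 0⟩
  | insert a S ha ih =>
    simp only [Finset.sum_insert ha]
    exact ⟨(hf a).add ih.1, by rw [hm.add _ _ (hf a) ih.1, ih.2]⟩

theorem pushforward (hm : IsMean m) {Ω' : Type*} (s : Ω → Ω') :
    ∃ m' : (Ω' → ℝ) → ℝ, IsMean m' ∧ ∀ f, Bd f → m' f = m (fun ω => f (s ω)) := by
  classical
  refine ⟨fun f => if Bd f then m (fun ω => f (s ω)) else 0, ⟨?_, ?_, ?_, ?_, ?_⟩, ?_⟩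
  · intro f g hf hg
    simp only [hf, hg, hf.add hg, if_true]
    exact hm.add _ _ (hf.comp s) (hg.comp s)
  · intro c f hf
    simp only [hf, hf.smul c, if_true]
    exact hm.smul _ _ (hf.comp s)
  · intro f hf h
    simp only [hf, if_true]
    exact hm.nonneg _ (hf.comp s) (fun ω => h _)
  · simp only [Bd.const, if_true]
    exact hm.one
  · intro f hf
    simp [hf]
  · intro f hf
    simp [hf]

end IsMean

theorem exists_mean (Ω : Type*) [Nonempty Ω] : ∃ m : (Ω → ℝ) → ℝ, IsMean m := by
  classical
  let x : Ω := Classical.arbitrary Ω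
  refine ⟨fun f => if Bd f then f x else 0, ⟨?_, ?_, ?_, ?_, ?_⟩⟩
  · intro f g hf hg
    simp [hf, hg, hf.add hg]
  · intro c f hf
    simp [hf, hf.smul c]
  · intro f hf h
    simpa [hf] using h x
  · simp [Bd.const]
  · intro f hf
    simp [hf]

/-- The point evaluation mean. -/
theorem exists_dirac {Ω : Type*} (x : Ω) :
    ∃ m : (Ω → ℝ) → ℝ, IsMean m ∧ ∀ f, Bd f → m f = f x := by
  obtain ⟨m, hm⟩ := exists_mean Unit
  obtain ⟨m', hm', h⟩ := hm.pushforward (fun _ => x)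
  exact ⟨m', hm', fun f hf => by rw [h f hf, hm.const]⟩

theorem isCompact_means (Ω : Type*) : IsCompact {m : (Ω → ℝ) → ℝ | IsMean m} := by
  classical
  let B : (Ω → ℝ) → ℝ := fun f => if h : Bd f then h.choose else 0
  have hc : IsCompact (Set.pi Set.univ fun f : Ω → ℝ => Icc (-B f) (B f)) :=
    isCompact_univ_pi fun f => isCompact_Icc
  refine hc.of_isClosed_subset ?_ ?_
  · have : {m : (Ω → ℝ) → ℝ | IsMean m} =
        (⋂ f, ⋂ g, ⋂ (_ : Bd f), ⋂ (_ : Bd g),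
          {m : (Ω → ℝ) → ℝ | m (fun ω => f ω + g ω) = m f + m g}) ∩
        ((⋂ c : ℝ, ⋂ f, ⋂ (_ : Bd f), {m : (Ω → ℝ) → ℝ | m (fun ω => c * f ω) = c * m f}) ∩
        ((⋂ f, ⋂ (_ : Bd f), ⋂ (_ : ∀ ω, 0 ≤ f ω), {m : (Ω → ℝ) → ℝ | 0 ≤ m f}) ∩
        ({m : (Ω → ℝ) → ℝ | m (fun _ => 1) = 1} ∩
        (⋂ f, ⋂ (_ : ¬ Bd f), {m : (Ω → ℝ) → ℝ | m f = 0})))) := by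
      ext m
      simp only [mem_inter_iff, mem_iInter, mem_ofPred_eq]
      constructor
      · rintro ⟨h1, h2, h3, h4, h5⟩
        exact ⟨h1, h2, h3, h4, h5⟩
      · rintro ⟨h1, h2, h3, h4, h5⟩
        exact ⟨h1, h2, h3, h4, h5⟩
    rw [this]
    refine IsClosed.inter ?_ (IsClosed.inter ?_ (IsClosed.inter ?_ (IsClosed.inter ?_ ?_)))
    · exact isClosed_iInter fun f => isClosed_iInter fun g => isClosed_iInter fun _ =>
        isClosed_iInter fun _ => isClosed_eq (continuous_apply _)
          (by fun_prop)
    · exact isClosed_iInter fun c => isClosed_iInter fun f => isClosed_iInter fun _ =>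
        isClosed_eq (continuous_apply _) (continuous_const.mul (continuous_apply _))
    · exact isClosed_iInter fun f => isClosed_iInter fun _ => isClosed_iInter fun _ =>
        isClosed_le continuous_const (continuous_apply _)
    · exact isClosed_eq (continuous_apply _) continuous_const
    · exact isClosed_iInter fun f => isClosed_iInter fun _ =>
        isClosed_eq (continuous_apply _) continuous_const
  · intro m hm f _
    by_cases h : Bd f
    · have := hm.abs_le (f := f) (C := B f) (by
        simp only [B, h, dif_pos]; exact h.choose_spec)
      exact abs_le.1 this
    · rw [hm.junk f h]; simp [B, h]

variable {G : Type*} [Group G]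

/-- Convolution of means. -/
def conv (m y : (G → ℝ) → ℝ) : (G → ℝ) → ℝ := fun f => m (fun g => y (fun h => f (g * h)))

theorem conv_assoc (m n y : (G → ℝ) → ℝ) : conv (conv m n) y = conv m (conv n y) := by
  funext f
  simp only [conv, mul_assoc]

theorem bd_left {f : G → ℝ} (hf : Bd f) (g : G) : Bd (fun h => f (g * h)) := hf.comp _

theorem bd_left_iff {f : G → ℝ} (g : G) : Bd (fun h => f (g * h)) ↔ Bd f := by
  refine ⟨fun h => ?_, fun h => bd_left h g⟩
  have := bd_left h g⁻¹
  simpa using this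

/-- The Poisson transform of a bounded function along `s : Ω → G` is bounded. -/
theorem bd_poisson {Ω : Type*} {y : (G → ℝ) → ℝ} (hy : IsMean y) (s : Ω → G) {f : G → ℝ}
    (hf : Bd f) : Bd (fun ω => y (fun h => f (s ω * h))) := by
  obtain ⟨C, hC⟩ := hf
  exact ⟨C, fun ω => hy.abs_le fun h => hC _⟩

theorem bd_conv {y : (G → ℝ) → ℝ} (hy : IsMean y) {f : G → ℝ}
    (hf : Bd f) : Bd (fun g => y (fun h => f (g * h))) := bd_poisson hy id hf

theorem IsMean.conv {m y : (G → ℝ) → ℝ} (hm : IsMean m) (hy : IsMean y) : IsMean (conv m y) := by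
  have hb : ∀ {f : G → ℝ}, Bd f → Bd (fun g => y (fun h => f (g * h))) :=
    fun hf => bd_poisson hy id hf
  refine ⟨?_, ?_, ?_, ?_, ?_⟩
  · intro f g hf hg
    simp only [_root_.conv]
    rw [← hm.add _ _ (hb hf) (hb hg)]
    congr 1; funext a
    exact hy.add _ _ (bd_left hf a) (bd_left hg a)
  · intro c f hf
    simp only [_root_.conv]
    rw [← hm.smul _ _ (hb hf)]
    congr 1; funext a
    exact hy.smul _ _ (bd_left hf a)
  · intro f hf h
    exact hm.nonneg _ (hb hf) fun a => hy.nonneg _ (bd_left hf a) fun _ => h _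
  · simp only [_root_.conv, hy.one, hm.one]
  · intro f hf
    simp only [_root_.conv]
    have : (fun g => y (fun h => f (g * h))) = fun _ => 0 := by
      funext g
      exact hy.junk _ (fun h => hf ((bd_left_iff g).1 h))
    rw [this, hm.const]

/-- A minimal closed left ideal in the convolution semigroup of means. -/
structure MinIdeal (N : Set ((G → ℝ) → ℝ)) : Prop where
  mean : ∀ y ∈ N, IsMean y
  ideal : ∀ m y, IsMean m → y ∈ N → conv m y ∈ N
  trans : ∀ y ∈ N, ∀ z ∈ N, ∃ m, IsMean m ∧ z = conv m y

theorem continuous_conv (y : (G → ℝ) → ℝ) : Continuous (fun m : (G → ℝ) → ℝ => conv m y) :=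
  continuous_pi fun _ => continuous_apply _

theorem exists_minIdeal (G : Type*) [Group G] :
    ∃ (N : Set ((G → ℝ) → ℝ)) (y : (G → ℝ) → ℝ), MinIdeal N ∧ y ∈ extremePoints ℝ N := by
  let P : Set (Set ((G → ℝ) → ℝ)) := {N | N.Nonempty ∧ IsClosed N ∧ (∀ y ∈ N, IsMean y) ∧
    ∀ m y, IsMean m → y ∈ N → conv m y ∈ N}
  have hM : {m : (G → ℝ) → ℝ | IsMean m} ∈ P :=
    ⟨exists_mean G, (isCompact_means G).isClosed, fun y hy => hy, fun m y hm hy => hm.conv hy⟩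
  obtain ⟨N, -, hN⟩ := zorn_superset_nonempty P (by
    intro c hc hchain hne
    refine ⟨⋂₀ c, ⟨?_, isClosed_sInter fun s hs => (hc hs).2.1, ?_, ?_⟩,
      fun s hs => sInter_subset_of_mem hs⟩
    · have : Nonempty c := hne.to_subtype
      refine IsCompact.nonempty_sInter_of_directed_nonempty_isCompact_isClosed
        ?_ (fun s hs => (hc hs).1) (fun s hs => ?_) (fun s hs => (hc hs).2.1)
      · intro s hs t ht
        rcases hchain.total hs ht with h | h
        · exact ⟨s, hs, subset_rfl, h⟩
        · exact ⟨t, ht, h, subset_rfl⟩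
      · exact (isCompact_means G).of_isClosed_subset (hc hs).2.1 (hc hs).2.2.1
    · intro y hy
      obtain ⟨s, hs⟩ := hne
      exact (hc hs).2.2.1 y (hy s hs)
    · intro m y hm hy s hs
      exact (hc hs).2.2.2 m y hm (hy s hs)) _ hM
  obtain ⟨⟨hne, hcl, hmean, hideal⟩, hmin⟩ := hN
  have htrans : ∀ y ∈ N, N ⊆ (fun m => conv m y) '' {m | IsMean m} := by
    intro y hy
    refine hmin ⟨?_, ?_, ?_, ?_⟩ ?_
    · have h0 : ({m : (G → ℝ) → ℝ | IsMean m}).Nonempty := exists_mean G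
      exact h0.image _
    · exact ((isCompact_means G).image (continuous_conv y)).isClosed
    · rintro _ ⟨m, hm, rfl⟩
      exact IsMean.conv hm (hmean y hy)
    · rintro n _ hn ⟨m, hm, rfl⟩
      exact ⟨conv n m, hn.conv hm, conv_assoc _ _ _⟩
    · rintro _ ⟨m, hm, rfl⟩
      exact hideal m y hm hy
  have hcomp : IsCompact N := (isCompact_means G).of_isClosed_subset hcl hmean
  obtain ⟨y, hy⟩ := hcomp.extremePoints_nonempty hne
  refine ⟨N, y, ⟨hmean, hideal, ?_⟩, hy⟩
  intro y hy z hz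
  obtain ⟨m, hm, h⟩ := htrans y hy hz
  exact ⟨m, hm, h.symm⟩

/-- Translation of a mean. -/
def tr (g : G) (y : (G → ℝ) → ℝ) : (G → ℝ) → ℝ := fun f => y (fun h => f (g * h))

theorem tr_mul (g k : G) (y : (G → ℝ) → ℝ) : tr (g * k) y = tr g (tr k y) := by
  funext f; simp only [tr, mul_assoc]

theorem tr_one (y : (G → ℝ) → ℝ) : tr 1 y = y := by
  funext f; simp only [tr, one_mul]

theorem mean_ext {Ω : Type*} {m n : (Ω → ℝ) → ℝ} (hm : IsMean m) (hn : IsMean n)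
    (h : ∀ f, Bd f → m f = n f) : m = n := by
  funext f
  by_cases hf : Bd f
  · exact h f hf
  · rw [hm.junk f hf, hn.junk f hf]

theorem MinIdeal.tr_mem {N : Set ((G → ℝ) → ℝ)} (hN : MinIdeal N) (g : G) {y : (G → ℝ) → ℝ}
    (hy : y ∈ N) : tr g y ∈ N := by
  obtain ⟨d, hd, h⟩ := exists_dirac g
  have : tr g y = conv d y := by
    have hy' := hN.mean y hy
    refine funext fun f => ?_
    by_cases hf : Bd f
    · simp only [conv, tr]
      rw [h _ (bd_conv hy' hf)]
    · rw [(hd.conv hy').junk f hf]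
      exact hy'.junk _ (fun h => hf ((bd_left_iff g).1 h))
  rw [this]
  exact hN.ideal d y hd hy

theorem MinIdeal.tr_ext {N : Set ((G → ℝ) → ℝ)} (hN : MinIdeal N) (g : G) {y : (G → ℝ) → ℝ}
    (hy : y ∈ extremePoints ℝ N) : tr g y ∈ extremePoints ℝ N := by
  rw [mem_extremePoints_iff_left] at hy ⊢
  refine ⟨hN.tr_mem g hy.1, fun x₁ h₁ x₂ h₂ hx => ?_⟩
  obtain ⟨a, b, ha, hb, hab, h⟩ := hx
  have := hy.2 _ (hN.tr_mem g⁻¹ h₁) _ (hN.tr_mem g⁻¹ h₂) ⟨a, b, ha, hb, hab, by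
    have h' : tr g⁻¹ (tr g y) = y := by rw [← tr_mul, inv_mul_cancel, tr_one]
    rw [← h', ← h]; rfl⟩
  rw [← this, ← tr_mul, mul_inv_cancel, tr_one]

/-- The stabilizer of a mean. -/
def stab (y : (G → ℝ) → ℝ) : Subgroup G where
  carrier := {g | tr g y = y}
  mul_mem' := by
    intro a b ha hb
    simp only [mem_ofPred_eq] at *
    rw [tr_mul, hb, ha]
  one_mem' := tr_one y
  inv_mem' := by
    intro a ha
    simp only [mem_ofPred_eq] at *
    conv_lhs => rw [← ha]
    rw [← tr_mul, inv_mul_cancel, tr_one]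

theorem mem_stab {y : (G → ℝ) → ℝ} {g : G} : g ∈ stab y ↔ tr g y = y := Iff.rfl

/-- If a mean on `Ω` has barycenter an extreme point, it is multiplicative on the functions coming
from the boundary. -/
theorem bauer {N : Set ((G → ℝ) → ℝ)} (hN : MinIdeal N) {y : (G → ℝ) → ℝ}
    (hy : y ∈ extremePoints ℝ N) {Ω : Type*} {μ : (Ω → ℝ) → ℝ} (hμ : IsMean μ) (s : Ω → G)
    {y₀ : (G → ℝ) → ℝ} (hy₀ : y₀ ∈ N)
    (hb : ∀ f, Bd f → μ (fun ω => y₀ (fun h => f (s ω * h))) = y f)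
    (k : Ω → ℝ) (hk : Bd k) (f : G → ℝ) (hf : Bd f) :
    μ (fun ω => k ω * y₀ (fun h => f (s ω * h))) = μ k * y f := by
  have hy₀' := hN.mean _ hy₀
  rw [mem_extremePoints_iff_left] at hy
  have hy' := hN.mean _ hy.1
  -- the barycenter of any mean is in N
  have hbar : ∀ ν : (Ω → ℝ) → ℝ, IsMean ν → ∃ q ∈ N, ∀ f, Bd f →
      q f = ν (fun ω => y₀ (fun h => f (s ω * h))) := by
    intro ν hν
    obtain ⟨m', hm', h⟩ := hν.pushforward s
    refine ⟨conv m' y₀, hN.ideal _ _ hm' hy₀, fun f hf => ?_⟩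
    simp only [conv]
    rw [h _ (bd_conv hy₀' hf)]
  have hcond : ∀ k : Ω → ℝ, (∀ ω, 0 ≤ k ω) → Bd k → 0 < μ k → IsMean (fun l => (μ k)⁻¹ * μ (fun ω => k ω * l ω) * (open Classical in if Bd l then 1 else 0)) := by
    classical
    intro k hk0 hk hpos
    refine ⟨?_, ?_, ?_, ?_, ?_⟩
    · intro f g hf hg
      simp only [hf, hg, hf.add hg, if_true, mul_add]
      rw [hμ.add _ _ (hk.mul hf) (hk.mul hg)]; ring
    · intro c f hf
      simp only [hf, hf.smul c, if_true]
      have : (fun ω => k ω * (c * f ω)) = fun ω => c * (k ω * f ω) := by funext; ring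
      rw [this, hμ.smul _ _ (hk.mul hf)]; ring
    · intro f hf h
      simp only [hf, if_true]
      have := hμ.nonneg _ (hk.mul hf) (fun ω => mul_nonneg (hk0 ω) (h ω))
      positivity
    · simp only [Bd.const, if_true, mul_one]
      exact inv_mul_cancel₀ hpos.ne'
    · intro f hf
      simp [hf]
  have key : ∀ k : Ω → ℝ, (∀ ω, 1/4 ≤ k ω ∧ k ω ≤ 3/4) →
      μ (fun ω => k ω * y₀ (fun h => f (s ω * h))) = μ k * y f := by
    intro k hk
    have hkB : Bd k := ⟨1, fun ω => abs_le.2 ⟨by linarith [(hk ω).1], by linarith [(hk ω).2]⟩⟩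
    have h1 : 1/4 ≤ μ k := by
      have := hμ.mono (Bd.const (1/4)) hkB (fun ω => (hk ω).1)
      rwa [hμ.const] at this
    have h2 : μ k ≤ 3/4 := by
      have := hμ.mono hkB (Bd.const (3/4)) (fun ω => (hk ω).2)
      rwa [hμ.const] at this
    have hk' : μ (fun ω => 1 - k ω) = 1 - μ k := by rw [hμ.sub (Bd.const 1) hkB, hμ.one]
    obtain ⟨q₁, hq₁, e₁⟩ := hbar _ (hcond k (fun ω => by linarith [(hk ω).1]) hkB (by linarith))
    obtain ⟨q₂, hq₂, e₂⟩ := hbar _ (hcond (fun ω => 1 - k ω) (fun ω => by linarith [(hk ω).2])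
      ((Bd.const 1).sub hkB) (by linarith))
    have hq : q₁ = y := by
      refine hy.2 q₁ hq₁ q₂ hq₂ ⟨μ k, 1 - μ k, by linarith, by linarith, by ring, ?_⟩
      funext f
      by_cases hf : Bd f
      · have hpf := bd_poisson hy₀' s hf
        simp only [Pi.add_apply, Pi.smul_apply, smul_eq_mul]
        rw [e₁ f hf, e₂ f hf, hk']
        simp only [hpf, if_true, mul_one]
        rw [mul_inv_cancel_left₀ (by linarith), mul_inv_cancel_left₀ (by linarith),
          ← hμ.add _ _ (hkB.mul hpf) (((Bd.const 1).sub hkB).mul hpf), ← hb f hf]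
        congr 1; funext ω; ring
      · simp only [Pi.add_apply, Pi.smul_apply, smul_eq_mul]
        rw [hy'.junk f hf, (hN.mean _ hq₁).junk f hf, (hN.mean _ hq₂).junk f hf]; simp
    have := e₁ f hf
    rw [hq] at this
    have hpf := bd_poisson hy₀' s hf
    simp only [hpf, if_true, mul_one] at this
    rw [this, mul_inv_cancel_left₀ (by linarith)]
  -- general k
  obtain ⟨C, hC⟩ := hk
  have hk : Bd k := ⟨C, hC⟩
  have hpf := bd_poisson hy₀' s hf
  set D := |C| + 1 with hD
  have hDpos : 0 < D := by positivity
  have hCD : ∀ ω, |k ω| ≤ D := fun ω => (hC ω).trans (by rw [hD]; linarith [le_abs_self C])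
  have := key (fun ω => 1/2 + (1/(4*D)) * k ω) (fun ω => by
    have h1 := abs_le.1 (hCD ω)
    have h2 : |1/(4*D) * k ω| ≤ 1/4 := by
      rw [abs_mul, abs_of_pos (by positivity)]
      calc 1/(4*D) * |k ω| ≤ 1/(4*D) * D := by gcongr; exact hCD ω
        _ = 1/4 := by field_simp
    have := abs_le.1 h2
    constructor <;> linarith)
  have e1 : (fun ω => (1/2 + (1/(4*D)) * k ω) * y₀ (fun h => f (s ω * h))) =
      fun ω => 1/2 * y₀ (fun h => f (s ω * h)) +
        (1/(4*D)) * (k ω * y₀ (fun h => f (s ω * h))) := by funext ω; ring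
  rw [e1, hμ.add _ _ (hpf.smul _) ((hk.mul hpf).smul _), hμ.smul _ _ hpf,
    hμ.smul _ _ (hk.mul hpf), hb f hf, hμ.add _ _ (Bd.const _) (hk.smul _), hμ.const,
    hμ.smul _ _ hk] at this
  have h4 : (1/(4*D)) ≠ 0 := by positivity
  have : (1/(4*D)) * μ (fun ω => k ω * y₀ (fun h => f (s ω * h))) = (1/(4*D)) * (μ k * y f) := by
    linarith
  exact mul_left_cancel₀ h4 this

end Means

section States
open Set
variable {D : Type*} [CStarAlgebra D]

/-- Real parts of states. -/
structure St (ψ : D → ℝ) : Prop where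
  add : ∀ x y, ψ (x + y) = ψ x + ψ y
  smul : ∀ (r : ℝ) x, ψ ((r : ℂ) • x) = r * ψ x
  le : ∀ x, ψ x ≤ ‖x‖
  one : ψ 1 = 1

namespace St
variable {ψ : D → ℝ}

theorem neg (h : St ψ) (x : D) : ψ (-x) = - ψ x := by
  have := h.smul (-1) x
  simpa using this

theorem sub (h : St ψ) (x y : D) : ψ (x - y) = ψ x - ψ y := by
  rw [sub_eq_add_neg, h.add, h.neg]; ring

theorem abs_le (h : St ψ) (x : D) : |ψ x| ≤ ‖x‖ := by
  rw [_root_.abs_le]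
  have := h.le (-x)
  rw [h.neg, norm_neg] at this
  exact ⟨by linarith, h.le x⟩

theorem skew (h : St ψ) {x : D} (hx : star x = -x) : ψ x = 0 := by
  have key : ∀ t : ℝ, (1 + t * ψ x) ^ 2 ≤ 1 + t ^ 2 * ‖x‖ ^ 2 := by
    intro t
    have h1 : ψ (1 + (t : ℂ) • x) = 1 + t * ψ x := by rw [h.add, h.one, h.smul]
    have h2 : ‖(1 + (t : ℂ) • x)‖ ^ 2 ≤ 1 + t ^ 2 * ‖x‖ ^ 2 := by
      rw [sq, ← CStarRing.norm_star_mul_self]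
      have e : star (1 + (t : ℂ) • x) * (1 + (t : ℂ) • x) =
          1 - ((t : ℂ) ^ 2) • (x * x) := by
        simp only [star_add, star_one, star_smul, hx, Complex.star_def, Complex.conj_ofReal]
        simp only [add_mul, mul_add, one_mul, mul_one, smul_neg, neg_mul, smul_mul_smul_comm, sq]
        abel
      rw [e]
      calc ‖1 - ((t : ℂ) ^ 2) • (x * x)‖ ≤ ‖(1 : D)‖ + ‖((t : ℂ) ^ 2) • (x * x)‖ := norm_sub_le _ _
        _ ≤ 1 + t ^ 2 * ‖x‖ ^ 2 := by
          have hn : Nontrivial D := ⟨1, 0, fun h0 => by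
            have h3 := h.one
            have h4 := h.smul 0 1
            rw [h0] at h3
            simp [h3] at h4⟩
          rw [CStarRing.norm_one, norm_smul, norm_pow, Complex.norm_real, Real.norm_eq_abs, sq_abs]
          gcongr
          rw [sq]; exact norm_mul_le _ _
    calc (1 + t * ψ x) ^ 2 = |ψ (1 + (t : ℂ) • x)| ^ 2 := by rw [h1, sq_abs]
      _ ≤ ‖(1 + (t : ℂ) • x)‖ ^ 2 := by gcongr; exact h.abs_le _
      _ ≤ _ := h2
  by_contra hne
  have hpos : 0 < ‖x‖ ^ 2 + 1 := by positivity
  have := key (ψ x / (‖x‖ ^ 2 + 1))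
  have h5 : 2 * (ψ x / (‖x‖ ^ 2 + 1)) * ψ x ≤ (ψ x / (‖x‖ ^ 2 + 1)) ^ 2 * ‖x‖ ^ 2 := by
    nlinarith [sq_nonneg (ψ x / (‖x‖ ^ 2 + 1) * ψ x)]
  have h6 : 0 < (ψ x) ^ 2 := by positivity
  have h7 : 2 * (ψ x / (‖x‖ ^ 2 + 1)) * ψ x = 2 * (ψ x) ^ 2 / (‖x‖ ^ 2 + 1) := by ring
  have h8 : (ψ x / (‖x‖ ^ 2 + 1)) ^ 2 * ‖x‖ ^ 2 ≤ (ψ x) ^ 2 / (‖x‖ ^ 2 + 1) := by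
    rw [div_pow, div_mul_eq_mul_div, div_le_div_iff₀ (by positivity) hpos]
    nlinarith [mul_pos h6 hpos]
  have h9 : 0 < (ψ x) ^ 2 / (‖x‖ ^ 2 + 1) := by positivity
  rw [h7] at h5
  have : 2 * (ψ x) ^ 2 / (‖x‖ ^ 2 + 1) = 2 * ((ψ x) ^ 2 / (‖x‖ ^ 2 + 1)) := by ring
  linarith

theorem star_eq (h : St ψ) (x : D) : ψ (star x) = ψ x := by
  have := h.skew (x := x - star x) (by rw [star_sub, star_star]; abel)
  rw [h.sub] at this
  linarith

theorem pos (h : St ψ) (x : D) : 0 ≤ ψ (star x * x) := by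
  let _ : PartialOrder D := CStarAlgebra.spectralOrder D
  have _ : StarOrderedRing D := CStarAlgebra.spectralOrderedRing D
  have h1 : star x * x ≤ algebraMap ℝ D (‖x‖ ^ 2) := CStarAlgebra.star_mul_le_algebraMap_norm_sq
  have h2 : 0 ≤ star x * x := star_mul_self_nonneg x
  have h3 : ‖algebraMap ℝ D (‖x‖ ^ 2) - star x * x‖ ≤ ‖algebraMap ℝ D (‖x‖ ^ 2)‖ :=
    CStarAlgebra.norm_le_norm_of_nonneg_of_le (sub_nonneg.2 h1) (sub_le_self _ h2)
  have hn : Nontrivial D := ⟨1, 0, fun h0 => by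
            have h3 := h.one
            have h4 := h.smul 0 1
            rw [h0] at h3
            simp [h3] at h4⟩
  have h4 : algebraMap ℝ D (‖x‖ ^ 2) = ((‖x‖ ^ 2 : ℝ) : ℂ) • (1 : D) := by
    rw [Algebra.algebraMap_eq_smul_one]; rfl
  have h5 := h.le (algebraMap ℝ D (‖x‖ ^ 2) - star x * x)
  rw [h.sub, h4, h.smul, h.one, ← h4] at h5
  rw [norm_algebraMap', Real.norm_of_nonneg (by positivity)] at h3
  linarith

theorem cs (h : St ψ) {a : D} (ha : ψ (star a * a) = 0) (x : D) : ψ (star a * x) = 0 := by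
  have key : ∀ t : ℝ, 0 ≤ ψ (star x * x) + 2 * t * ψ (star a * x) := by
    intro t
    have h1 := h.pos (x + (t : ℂ) • a)
    have e : star (x + (t : ℂ) • a) * (x + (t : ℂ) • a) =
        star x * x + (t : ℂ) • (star (star a * x)) + (t : ℂ) • (star a * x) +
          ((t * t : ℝ) : ℂ) • (star a * a) := by
      simp only [star_add, star_smul, Complex.star_def, Complex.conj_ofReal, star_mul, star_star,
        add_mul, mul_add, smul_mul_smul_comm, smul_mul_assoc, mul_smul_comm, Complex.ofReal_mul, smul_smul, smul_add]
      abel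
    rw [e, h.add, h.add, h.add, h.smul, h.smul, h.smul, h.star_eq, ha] at h1
    linarith
  by_contra hne
  have := key (- (ψ (star x * x) + 1) / (2 * ψ (star a * x)))
  have e : 2 * (- (ψ (star x * x) + 1) / (2 * ψ (star a * x))) * ψ (star a * x) =
    - (ψ (star x * x) + 1) := by field_simp
  rw [e] at this
  linarith

theorem cs' (h : St ψ) {a : D} (ha : ψ (star a * a) = 0) (x : D) : ψ (x * a) = 0 := by
  have := h.cs ha (star x)
  rw [← h.star_eq] at this
  simpa using this

theorem avg {G : Type*} (h : St ψ) {m : (G → ℝ) → ℝ} (hm : IsMean m) (u : G → D)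
    (hu : ∀ g, ‖u g‖ ≤ 1) (hu1 : ∀ g, star (u g) * u g = 1) :
    St (fun x => m (fun g => ψ (star (u g) * x * u g))) := by
  have hn : ∀ x g, ‖star (u g) * x * u g‖ ≤ ‖x‖ := by
    intro x g
    calc ‖star (u g) * x * u g‖ ≤ ‖star (u g)‖ * ‖x‖ * ‖u g‖ :=
          (norm_mul_le _ _).trans (by gcongr; exact norm_mul_le _ _)
      _ ≤ 1 * ‖x‖ * 1 := by rw [norm_star]; gcongr <;> exact hu g
      _ = ‖x‖ := by ring
  have hab : ∀ x g, |ψ (star (u g) * x * u g)| ≤ ‖x‖ := fun x g => (h.abs_le _).trans (hn x g)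
  have hB : ∀ x, Bd (fun g => ψ (star (u g) * x * u g)) := fun x => ⟨‖x‖, hab x⟩
  refine ⟨?_, ?_, ?_, ?_⟩
  · intro x y
    simp only [mul_add, add_mul, h.add]
    exact hm.add _ _ (hB x) (hB y)
  · intro r x
    simp only [mul_smul_comm, smul_mul_assoc, h.smul]
    exact hm.smul _ _ (hB x)
  · intro x
    exact (le_abs_self _).trans (hm.abs_le (hab x))
  · simp only [mul_one, hu1, h.one, hm.one]
end St

theorem exists_st (W : Submodule ℂ D) (hW : ∀ w ∈ W, 1 ≤ ‖1 - w‖) :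
    ∃ ψ : D → ℝ, St ψ ∧ ∀ w ∈ W, ψ w = 0 := by
  obtain ⟨f, hf, hf1⟩ := exists_dual_vector'' ℂ (W.mkQ 1)
  have hn : Nontrivial D := ⟨1, 0, fun h0 => by
    have := hW 0 W.zero_mem
    rw [sub_zero, h0, norm_zero] at this
    linarith⟩
  have h1 : ‖W.mkQ 1‖ = 1 := by
    refine le_antisymm ((Submodule.Quotient.norm_mk_le W 1).trans CStarRing.norm_one.le) ?_
    refine (QuotientAddGroup.le_norm_iff (S := W.toAddSubgroup)).2 fun m hm => ?_
    have : (1 : D) - m ∈ W := (Submodule.Quotient.eq W).1 hm.symm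
    have := hW _ this
    simpa using this
  have hle : ∀ x, ‖f (W.mkQ x)‖ ≤ ‖x‖ := fun x => by
    calc ‖f (W.mkQ x)‖ ≤ ‖f‖ * ‖W.mkQ x‖ := f.le_opNorm _
      _ ≤ 1 * ‖x‖ := by gcongr; exact Submodule.Quotient.norm_mk_le W x
      _ = ‖x‖ := one_mul _
  refine ⟨fun x => (f (W.mkQ x)).re, ⟨?_, ?_, ?_, ?_⟩, ?_⟩
  · intro x y; simp
  · intro r x; simp
  · intro x; exact (Complex.re_le_norm _).trans (hle x)
  · simp only [hf1, h1]; simp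
  · intro w hw
    have : W.mkQ w = 0 := by simpa using hw
    simp only [this, map_zero, Complex.zero_re]

/-- A covariant pair: unitaries `u` and multiplication operators `M` for a `G`-set. -/
structure Cov {G Ω : Type*} [Group G] [MulAction G Ω] (u : G → D) (M : (Ω → ℝ) → D) : Prop where
  add : ∀ k l, Bd k → Bd l → M (fun ω => k ω + l ω) = M k + M l
  smul : ∀ (c : ℝ) k, Bd k → M (fun ω => c * k ω) = (c : ℂ) • M k
  mul : ∀ k l, Bd k → Bd l → M (fun ω => k ω * l ω) = M k * M l
  star_eq : ∀ k, star (M k) = M k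
  one : M (fun _ => 1) = 1
  norm : ∀ k C, 0 ≤ C → (∀ ω, |k ω| ≤ C) → ‖M k‖ ≤ C
  junk : ∀ k, ¬ Bd k → M k = 0
  unorm : ∀ g, ‖u g‖ ≤ 1
  usu : ∀ g, star (u g) * u g = 1
  uus : ∀ g, u g * star (u g) = 1
  cov : ∀ g k, star (u g) * M k * u g = M (fun ω => k (g • ω))

theorem Cov.mean {G Ω : Type*} [Group G] [MulAction G Ω] {u : G → D} {M : (Ω → ℝ) → D}
    (hc : Cov u M) {ψ : D → ℝ} (h : St ψ) : IsMean (fun k => ψ (M k)) := by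
  refine ⟨?_, ?_, ?_, ?_, ?_⟩
  · intro f g hf hg
    simp only [hc.add f g hf hg, h.add]
  · intro c f hf
    simp only [hc.smul c f hf, h.smul]
  · rintro f ⟨C, hC⟩ hf0
    have hf : Bd f := ⟨C, hC⟩
    set E := |C| with hE
    have hE0 : 0 ≤ E := abs_nonneg C
    have h1 : M (fun ω => E + (-1) * f ω) = (E : ℂ) • 1 + ((-1 : ℝ) : ℂ) • M f := by
      rw [hc.add _ _ (Bd.const _) (hf.smul _), hc.smul _ _ hf]
      have := hc.smul E _ (Bd.const 1)
      simp only [mul_one] at this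
      rw [this, hc.one]
    have h2 : ‖M (fun ω => E + (-1) * f ω)‖ ≤ E := by
      refine hc.norm _ _ hE0 fun ω => ?_
      have := (le_abs_self _).trans ((hC ω).trans (le_abs_self C))
      rw [abs_le]
      constructor <;> linarith [hf0 ω]
    have h3 := h.le (M (fun ω => E + (-1) * f ω))
    rw [h1, h.add, h.smul, h.smul, h.one, ← h1] at h3
    show 0 ≤ ψ (M f)
    linarith
  · simp only [hc.one, h.one]
  · intro f hf
    have := h.smul 0 0
    simp only [hc.junk f hf]
    simpa using this

theorem key_lemma {G Ω : Type*} [Group G] [MulAction G Ω] {u : G → D} {M : (Ω → ℝ) → D}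
    (hc : Cov u M) {N : Set ((G → ℝ) → ℝ)} (hN : MinIdeal N) {y : (G → ℝ) → ℝ}
    (hy : y ∈ extremePoints ℝ N) (s : Ω → G) {y₀ : (G → ℝ) → ℝ} (hy₀ : y₀ ∈ N)
    (hs : ∀ g ω f, Bd f → y₀ (fun h => f (s (g • ω) * h)) = y₀ (fun h => f (g * (s ω * h))))
    (W : Submodule ℂ D) (hW : ∀ w ∈ W, 1 ≤ ‖1 - w‖)
    (hWinv : ∀ g, ∀ w ∈ W, star (u g) * w * u g ∈ W) :
    ∃ ψ : D → ℝ, St ψ ∧ (∀ w ∈ W, ψ w = 0) ∧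
      (∀ f, Bd f → ∀ x, ψ (x * M (fun ω => y₀ (fun h => f (s ω * h)))) = y f * ψ x) ∧
      (∀ g, tr g y ≠ y → ∀ c : ℂ, ψ (c • u g) = 0) := by
  obtain ⟨ψ₀, hψ₀, hψW⟩ := exists_st W hW
  have hy₀' := hN.mean _ hy₀
  have hy' := hN.mean _ (extremePoints_subset hy)
  -- barycenter of ψ₀
  obtain ⟨m', hm', hpush⟩ := (hc.mean hψ₀).pushforward s
  have hy1 : conv m' y₀ ∈ N := hN.ideal _ _ hm' hy₀
  have hy1f : ∀ f, Bd f → conv m' y₀ f = ψ₀ (M (fun ω => y₀ (fun h => f (s ω * h)))) := by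
    intro f hf
    simp only [conv]
    rw [hpush _ (bd_conv hy₀' hf)]
  obtain ⟨m, hm, hym⟩ := hN.trans _ hy1 _ (extremePoints_subset hy)
  have hst := hψ₀.avg hm u hc.unorm hc.usu
  set ψ : D → ℝ := fun x => m (fun g => ψ₀ (star (u g) * x * u g)) with hψ
  have hbar : ∀ f, Bd f → ψ (M (fun ω => y₀ (fun h => f (s ω * h)))) = y f := by
    intro f hf
    rw [hym, hψ]
    show m _ = m _
    congr 1; funext g
    rw [hy1f _ (bd_left hf g), hc.cov]
    congr 2; funext ω
    exact hs g ω f hf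
  have hbauer := bauer hN hy (hc.mean hst) s hy₀ hbar
  -- variance
  have hvar : ∀ f, Bd f → ∀ x, ψ (x * M (fun ω => y₀ (fun h => f (s ω * h)))) = y f * ψ x ∧
      ψ (M (fun ω => y₀ (fun h => f (s ω * h))) * x) = y f * ψ x := by
    intro f hf x
    have hpf := bd_poisson hy₀' s hf
    set a := M (fun ω => y₀ (fun h => f (s ω * h))) with ha
    have h1 : ψ (a * a) = y f * y f := by
      rw [ha, ← hc.mul _ _ hpf hpf]
      have := hbauer _ hpf f hf
      rw [this, hbar f hf]
    have hsa : star (a - (y f : ℂ) • 1) = a - (y f : ℂ) • 1 := by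
      rw [star_sub, star_smul, star_one, ha, hc.star_eq, Complex.star_def, Complex.conj_ofReal]
    have h2 : ψ (star (a - (y f : ℂ) • 1) * (a - (y f : ℂ) • 1)) = 0 := by
      rw [hsa]
      have e : (a - (y f : ℂ) • 1) * (a - (y f : ℂ) • 1) =
          a * a - (y f : ℂ) • a - (y f : ℂ) • a + ((y f * y f : ℝ) : ℂ) • 1 := by
        simp only [sub_mul, mul_sub, mul_smul_comm, smul_mul_assoc, mul_one, one_mul, smul_smul,
          Complex.ofReal_mul, smul_sub]
        abel
      rw [e, hst.add, hst.sub, hst.sub, hst.smul, hst.smul, hst.one, h1, hbar f hf]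
      ring
    constructor
    · have := hst.cs' h2 x
      rw [mul_sub, hst.sub, mul_smul_comm, mul_one, hst.smul] at this
      linarith
    · have := hst.cs h2 x
      rw [hsa, sub_mul, hst.sub, smul_mul_assoc, one_mul, hst.smul] at this
      linarith
  refine ⟨ψ, hst, ?_, fun f hf x => (hvar f hf x).1, ?_⟩
  · intro w hw
    have : (fun g => ψ₀ (star (u g) * w * u g)) = fun _ => 0 := by
      funext g; exact hψW _ (hWinv g w hw)
    simp only [hψ]
    rw [this, hm.const]
  · intro g hg c
    by_contra hne
    apply hg
    refine mean_ext (hN.mean _ (hN.tr_mem g (extremePoints_subset hy))) hy' fun f hf => ?_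
    have h1 := (hvar f hf (c • u g)).2
    have h2 := (hvar _ (bd_left hf g) (c • u g)).1
    have h3 : M (fun ω => y₀ (fun h => f (s ω * h))) * (c • u g) =
        (c • u g) * M (fun ω => y₀ (fun h => f (g * (s ω * h)))) := by
      have h4 := hc.cov g (fun ω => y₀ (fun h => f (s ω * h)))
      have h5 : (fun ω => y₀ (fun h => f (s (g • ω) * h))) =
          fun ω => y₀ (fun h => f (g * (s ω * h))) := by
        funext ω; exact hs g ω f hf
      simp only [h5] at h4
      rw [← h4, mul_smul_comm, smul_mul_assoc, mul_assoc (star (u g)), ← mul_assoc (u g),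
        hc.uus, one_mul]
    rw [h3, h2] at h1
    exact mul_right_cancel₀ hne h1

end States

section Concrete
variable {G Ω : Type*} [Group G] [MulAction G Ω]

theorem permMem (g : G) (f : ℓ²(Ω, ℂ)) : Memℓp (fun ω => f (g⁻¹ • ω)) 2 := by
  have hf : Summable fun i : Ω => ‖f i‖ ^ (2 : ℝ≥0∞).toReal :=
    (memℓp_gen_iff (by norm_num)).1 (lp.memℓp f)
  exact memℓp_gen ((MulAction.toPerm g⁻¹).summable_iff.2 hf)

/-- A map is implemented by permutations. -/
def IsPerm (u : G → ℓ²(Ω, ℂ) →L[ℂ] ℓ²(Ω, ℂ)) : Prop :=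
  ∀ g ξ ω, u g ξ ω = ξ (g⁻¹ • ω)

variable (Ω) in
theorem exists_perm : ∃ u : G → ℓ²(Ω, ℂ) →L[ℂ] ℓ²(Ω, ℂ), IsPerm u := by
  have hn : ∀ (g : G) (f : ℓ²(Ω, ℂ)),
      ‖(⟨fun ω => f (g⁻¹ • ω), permMem g f⟩ : ℓ²(Ω, ℂ))‖ = ‖f‖ := by
    intro g f
    rw [lp.norm_eq_tsum_rpow (by norm_num) f, lp.norm_eq_tsum_rpow (by norm_num)]
    congr 1
    exact (MulAction.toPerm g⁻¹).tsum_eq (fun h => ‖f h‖ ^ (2 : ℝ≥0∞).toReal)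
  refine ⟨fun g => LinearMap.mkContinuous
    { toFun := fun f => ⟨fun ω => f (g⁻¹ • ω), permMem g f⟩
      map_add' := by intro f₁ f₂; ext h; rfl
      map_smul' := by intro c f; ext h; rfl } 1 (fun f => ?_), ?_⟩
  · rw [one_mul]; exact (hn g f).le
  · intro g ξ ω; rfl

theorem isPerm_lreg : IsPerm (lreg (G := G)) := by
  intro g ξ ω
  unfold lreg lregE
  rfl

theorem mulMem {k : Ω → ℝ} {C : ℝ} (hC : ∀ ω, |k ω| ≤ C) (f : ℓ²(Ω, ℂ)) :
    Memℓp (fun ω => (k ω : ℂ) * f ω) 2 := by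
  have := (lp.memℓp ((C : ℂ) • f))
  refine this.mono' fun ω => ?_
  rw [lp.coeFn_smul, Pi.smul_apply, norm_mul, norm_smul, Complex.norm_real, Complex.norm_real]
  gcongr
  exact (hC ω).trans (le_abs_self C)

variable (Ω) in
theorem exists_mul : ∃ M : (Ω → ℝ) → ℓ²(Ω, ℂ) →L[ℂ] ℓ²(Ω, ℂ),
    (∀ k C, 0 ≤ C → (∀ ω, |k ω| ≤ C) → ‖M k‖ ≤ C) ∧ (∀ k, ¬ Bd k → M k = 0) ∧
    (∀ k, Bd k → ∀ f ω, M k f ω = (k ω : ℂ) * f ω) := by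
  classical
  have hb : ∀ (k : Ω → ℝ) C, (∀ ω, |k ω| ≤ C) → ∃ T : ℓ²(Ω, ℂ) →L[ℂ] ℓ²(Ω, ℂ),
      ∀ f ω, T f ω = (k ω : ℂ) * f ω := by
    intro k C hC
    refine ⟨LinearMap.mkContinuous
      { toFun := fun f => ⟨fun ω => (k ω : ℂ) * f ω, mulMem hC f⟩
        map_add' := by intro f₁ f₂; ext h; simp [mul_add]; rfl
        map_smul' := by intro c f; ext h; simp [mul_left_comm] } |C| (fun f => ?_), ?_⟩
    · have : ‖(C : ℂ) • f‖ = |C| * ‖f‖ := by rw [norm_smul, Complex.norm_real, Real.norm_eq_abs]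
      rw [← this]
      refine lp.norm_mono (by norm_num) fun ω => ?_
      rw [lp.coeFn_smul, Pi.smul_apply, norm_smul, Complex.norm_real]
      simp only [LinearMap.coe_mk, AddHom.coe_mk, norm_mul, Complex.norm_real]
      gcongr
      exact (hC ω).trans (le_abs_self C)
    · intro ξ ω; rfl
  have hb' : ∀ k : Ω → ℝ, Bd k → ∃ T : ℓ²(Ω, ℂ) →L[ℂ] ℓ²(Ω, ℂ), ∀ f ω, T f ω = (k ω : ℂ) * f ω :=
    fun k ⟨C, hC⟩ => hb k C hC
  choose T hT using hb'
  refine ⟨fun k => if h : Bd k then T k h else 0, ?_, ?_, ?_⟩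
  · intro k C hC0 hC
    have hk : Bd k := ⟨C, hC⟩
    simp only [hk, dif_pos]
    refine ContinuousLinearMap.opNorm_le_bound _ hC0 fun f => ?_
    have : ‖(C : ℂ) • f‖ = C * ‖f‖ := by
      rw [norm_smul, Complex.norm_real, Real.norm_eq_abs, abs_of_nonneg hC0]
    rw [← this]
    refine lp.norm_mono (by norm_num) fun ω => ?_
    rw [lp.coeFn_smul, Pi.smul_apply, norm_smul, Complex.norm_real, hT, norm_mul, Complex.norm_real]
    gcongr
    exact (hC ω).trans (le_abs_self C)
  · intro k hk; simp only [hk, dif_neg, not_false_eq_true]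
  · intro k hk f ω; simp only [hk, dif_pos, hT]

theorem op_ext {S T : ℓ²(Ω, ℂ) →L[ℂ] ℓ²(Ω, ℂ)} (h : ∀ f ω, S f ω = T f ω) : S = T := by
  refine ContinuousLinearMap.ext fun f => ?_
  ext ω
  exact h f ω

section
variable {u : G → ℓ²(Ω, ℂ) →L[ℂ] ℓ²(Ω, ℂ)}

theorem IsPerm.norm_eq (hu : IsPerm u) (g : G) (f : ℓ²(Ω, ℂ)) : ‖u g f‖ = ‖f‖ := by
  rw [lp.norm_eq_tsum_rpow (by norm_num) f, lp.norm_eq_tsum_rpow (by norm_num)]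
  congr 1
  simp only [hu g f]
  exact (MulAction.toPerm g⁻¹).tsum_eq (fun h => ‖f h‖ ^ (2 : ℝ≥0∞).toReal)

theorem IsPerm.mul (hu : IsPerm u) (g h : G) : u (g * h) = u g * u h := by
  refine op_ext fun f ω => ?_
  rw [mul_apply_eq_comp, hu, hu, hu, mul_inv_rev, mul_smul]

theorem IsPerm.one (hu : IsPerm u) : u 1 = 1 := by
  refine op_ext fun f ω => ?_
  rw [hu, one_apply_eq_self, inv_one, one_smul]

theorem IsPerm.star_eq (hu : IsPerm u) (g : G) : star (u g) = u g⁻¹ := by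
  symm
  rw [ContinuousLinearMap.star_eq_adjoint, ContinuousLinearMap.eq_adjoint_iff]
  intro x y
  rw [lp.inner_eq_tsum, lp.inner_eq_tsum]
  rw [← (MulAction.toPerm g⁻¹).tsum_eq]
  refine tsum_congr fun ω => ?_
  rw [hu, hu, inv_inv]
  simp

theorem exists_cov (hu : IsPerm u) : ∃ M : (Ω → ℝ) → ℓ²(Ω, ℂ) →L[ℂ] ℓ²(Ω, ℂ),
    Cov u M ∧ (∀ k, Bd k → ∀ f ω, M k f ω = (k ω : ℂ) * f ω) := by
  obtain ⟨M, h1, h2, h3⟩ := exists_mul Ω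
  have hs : ∀ g, star (u g) * u g = 1 := fun g => by
    rw [hu.star_eq, ← hu.mul, inv_mul_cancel, hu.one]
  have hs' : ∀ g, u g * star (u g) = 1 := fun g => by
    rw [hu.star_eq, ← hu.mul, mul_inv_cancel, hu.one]
  refine ⟨M, ⟨?_, ?_, ?_, ?_, ?_, h1, h2, ?_, hs, hs', ?_⟩, h3⟩
  · intro k l hk hl
    refine op_ext fun f ω => ?_
    rw [h3 _ (hk.add hl), add_apply, lp.coeFn_add, Pi.add_apply, h3 _ hk,
      h3 _ hl, Complex.ofReal_add, add_mul]
  · intro c k hk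
    refine op_ext fun f ω => ?_
    rw [h3 _ (hk.smul c), smul_apply, lp.coeFn_smul, Pi.smul_apply, h3 _ hk,
      Complex.ofReal_mul, smul_eq_mul, mul_assoc]
  · intro k l hk hl
    refine op_ext fun f ω => ?_
    rw [h3 _ (hk.mul hl), mul_apply_eq_comp, h3 _ hk,
      h3 _ hl, Complex.ofReal_mul, mul_assoc]
  · intro k
    by_cases hk : Bd k
    · symm
      rw [ContinuousLinearMap.star_eq_adjoint, ContinuousLinearMap.eq_adjoint_iff]
      intro x y
      rw [lp.inner_eq_tsum, lp.inner_eq_tsum]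
      simp only [h3 _ hk]
      congr 1; funext ω
      simp [mul_assoc, mul_left_comm]
    · rw [h2 _ hk, star_zero]
  · refine op_ext fun f ω => ?_
    rw [h3 _ (Bd.const 1), one_apply_eq_self, Complex.ofReal_one, one_mul]
  · intro g
    refine ContinuousLinearMap.opNorm_le_bound _ zero_le_one fun f => ?_
    rw [one_mul, hu.norm_eq]
  · intro g k
    by_cases hk : Bd k
    · refine op_ext fun f ω => ?_
      rw [hu.star_eq, mul_apply_eq_comp, mul_apply_eq_comp, hu, h3 _ hk, hu,
        h3 _ (hk.comp _)]
      simp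
    · rw [h2 _ hk, h2, mul_zero, zero_mul]
      intro h
      apply hk
      have := h.comp (fun ω => g⁻¹ • ω)
      simpa using this
end

end Concrete

section AmenRec
open Set

theorem memInfty {H : Type*} {f : H → ℝ} (hf : Bd f) : Memℓp f ∞ := by
  obtain ⟨C, hC⟩ := hf
  exact memℓp_infty ⟨C, by rintro _ ⟨x, rfl⟩; exact hC x⟩

theorem bd_lp {H : Type*} (f : lp (fun _ : H => ℝ) ∞) : Bd (fun h => f h) := by
  obtain ⟨C, hC⟩ := memℓp_infty_iff.1 (lp.memℓp f)
  exact ⟨C, fun h => hC ⟨h, rfl⟩⟩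

theorem IsAmenable.exists_mean {H : Type*} [Group H] (hH : IsAmenable H) :
    ∃ m : (H → ℝ) → ℝ, IsMean m ∧ ∀ h f, Bd f → m (fun k => f (h * k)) = m f := by
  classical
  obtain ⟨m0, h1, h2, h3⟩ := hH
  refine ⟨fun f => if h : Bd f then m0 ⟨f, memInfty h⟩ else 0, ⟨?_, ?_, ?_, ?_, ?_⟩, ?_⟩
  · intro f g hf hg
    simp only [hf, hg, hf.add hg, dif_pos]
    rw [← map_add]; rfl
  · intro c f hf
    simp only [hf, hf.smul c, dif_pos]
    rw [← smul_eq_mul, ← map_smul]; rfl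
  · intro f hf h
    simp only [hf, dif_pos]
    exact h2 _ h
  · simp only [Bd.const, dif_pos]
    exact h1
  · intro f hf
    simp only [hf, dif_neg, not_false_eq_true]
  · intro h f hf
    have hf' : Bd (fun k => f (h * k)) := hf.comp _
    simp only [hf, hf', dif_pos]
    rw [← h3 h⁻¹ ⟨f, memInfty hf⟩]
    congr 1
    refine Subtype.ext ?_
    funext k
    simp [translInfty]

variable {G : Type*} [Group G]

theorem stab_amenable {y : (G → ℝ) → ℝ} (hy : IsMean y) : IsAmenable (stab y) := by
  classical
  let t : G → G := fun g => (Quotient.mk (QuotientGroup.rightRel (stab y)) g).out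
  have ht : ∀ g, g * (t g)⁻¹ ∈ stab y := by
    intro g
    have : QuotientGroup.rightRel (stab y) (t g) g := Quotient.mk_out (s := QuotientGroup.rightRel (stab y)) g
    exact QuotientGroup.rightRel_apply.1 this
  have ht2 : ∀ h ∈ stab y, ∀ g, t (h * g) = t g := by
    intro h hh g
    have : (Quotient.mk (QuotientGroup.rightRel (stab y)) (h * g)) = Quotient.mk _ g := by
      apply Quotient.sound
      refine QuotientGroup.rightRel_apply.2 ?_
      simpa using hh
    simp only [t, this]
  let κ : G → stab y := fun g => ⟨g * (t g)⁻¹, ht g⟩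
  have hκ : ∀ (h : stab y) g, κ (h * g) = h * κ g := by
    intro h g
    apply Subtype.ext
    simp only [κ, ht2 h h.2, Subgroup.coe_mul, mul_assoc]
  have hB : ∀ f : lp (fun _ : stab y => ℝ) ∞, Bd (fun g => f (κ g)) := fun f => (bd_lp f).comp κ
  refine ⟨{ toFun := fun f => y (fun g => f (κ g)), map_add' := ?_, map_smul' := ?_ }, ?_, ?_, ?_⟩
  · intro f g
    exact hy.add _ _ (hB f) (hB g)
  · intro c f
    exact hy.smul _ _ (hB f)
  · exact hy.one
  · intro f hf
    exact hy.nonneg _ (hB f) fun g => hf _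
  · intro h f
    show y (fun g => f (h⁻¹ * κ g)) = y (fun g => f (κ g))
    have e : y (fun g => f (κ (((h⁻¹ : stab y) : G) * g))) = y (fun g => f (κ g)) :=
      congrFun (mem_stab.1 (h⁻¹).2) (fun g => f (κ g))
    rw [← e]
    simp only [hκ]

theorem mem_conjSub {g x : G} {H : Subgroup G} : x ∈ conjSub g H ↔ g⁻¹ * x * g ∈ H := by
  unfold conjSub
  rw [Subgroup.mem_map]
  constructor
  · rintro ⟨h, hh, rfl⟩
    simpa [mul_assoc] using hh
  · intro h
    exact ⟨_, h, by simp [mul_assoc]⟩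

theorem isRecurrent_iff {H : Subgroup G} : IsRecurrent H ↔
    ∃ F : Finset G, (1 : G) ∉ F ∧ ∀ g, ∃ s ∈ F, s ∈ conjSub g H := by
  classical
  let ι : Subgroup G → G → Bool := fun H g => @decide (g ∈ H) (Classical.propDecidable _)
  have hι : Topology.IsInducing ι := ⟨rfl⟩
  have hιt : ∀ (K : Subgroup G) g, ι K g = true ↔ g ∈ K := by
    intro K g; simp [ι]
  have hopen : ∀ F : Finset G, (1 : G) ∉ F → IsOpen {K : Subgroup G | ∀ s ∈ F, s ∉ K} := by
    intro F hF
    have : {K : Subgroup G | ∀ s ∈ F, s ∉ K} = ⋂ s ∈ F, (fun K => ι K s) ⁻¹' {false} := by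
      ext K
      simp [ι]
    rw [this]
    refine isOpen_biInter_finset fun s _ => ?_
    exact IsOpen.preimage ((continuous_apply s).comp hι.continuous) (isOpen_discrete _)
  unfold IsRecurrent
  constructor
  · intro h
    by_contra hcon
    push Not at hcon
    apply h
    rw [hι.closure_eq_preimage_closure_image]
    show ι ⊥ ∈ closure _
    rw [mem_closure_iff_nhds]
    intro t ht
    rw [nhds_pi, Filter.mem_pi] at ht
    obtain ⟨I, hI, T, hT, hsub⟩ := ht
    obtain ⟨g, hg⟩ := hcon (hI.toFinset.erase 1) (by simp)
    refine ⟨ι (conjSub g H), hsub ?_, ⟨_, ⟨g, rfl⟩, rfl⟩⟩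
    intro s hs
    have : ι (conjSub g H) s = ι ⊥ s := by
      rw [Bool.eq_iff_iff, hιt, hιt, Subgroup.mem_bot]
      by_cases h1 : s = 1
      · subst h1; simp [one_mem]
      · simp only [h1, iff_false]
        exact hg s (by simp [h1, hs])
    rw [this]
    exact mem_of_mem_nhds (hT s)
  · rintro ⟨F, hF, h⟩ hcl
    obtain ⟨K, hK, g, rfl⟩ := mem_closure_iff.1 hcl _ (hopen F hF) (by
      intro s hs h1
      rw [Subgroup.mem_bot] at h1
      exact hF (h1 ▸ hs))
    obtain ⟨s, hs, hsK⟩ := h g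
    exact hK s hs hsK

end AmenRec

section Spans
open Set

theorem adjoin_span {G A : Type*} [Group G] [Ring A] [StarRing A] [Algebra ℂ A] [StarModule ℂ A]
    {v : G → A} (h1 : v 1 = 1) (hm : ∀ g h, v (g * h) = v g * v h) (hs : ∀ g, star (v g) = v g⁻¹)
    {a : A} (ha : a ∈ StarAlgebra.adjoin ℂ (range v)) :
    ∃ c : G →₀ ℂ, (c.sum fun g z => z • v g) = a := by
  have h2 : a ∈ Submodule.span ℂ (Submonoid.closure (range v ∪ star (range v)) : Set A) := by
    rw [← StarAlgebra.adjoin_eq_span]; exact ha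
  have h3 : (Submonoid.closure (range v ∪ star (range v)) : Set A) ⊆ range v := by
    let P : Submonoid A :=
      { carrier := range v
        mul_mem' := by
          rintro _ _ ⟨g, rfl⟩ ⟨h, rfl⟩; exact ⟨g * h, hm g h⟩
        one_mem' := ⟨1, h1⟩ }
    have : Submonoid.closure (range v ∪ star (range v)) ≤ P := by
      rw [Submonoid.closure_le]
      rintro x (hx | ⟨g, hg⟩)
      · exact hx
      · refine ⟨g⁻¹, ?_⟩
        rw [← hs, hg, star_star]
    exact this
  have h4 := Submodule.span_mono h3 h2
  exact Finsupp.mem_span_range_iff_exists_finsupp.1 h4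

end Spans

section Simple
open Set
variable {G : Type u} [Group G]

theorem lreg_mem (g : G) : lreg g ∈ redCstar G := by
  unfold redCstar
  exact StarSubalgebra.le_topologicalClosure _ (StarAlgebra.subset_adjoin ℂ _ ⟨g, rfl⟩)

theorem isClosed_redCstar : IsClosed (redCstar G : Set (ℓ²(G, ℂ) →L[ℂ] ℓ²(G, ℂ))) := by
  unfold redCstar
  exact StarSubalgebra.isClosed_topologicalClosure _

theorem redCstar_approx {a : ℓ²(G, ℂ) →L[ℂ] ℓ²(G, ℂ)} (ha : a ∈ redCstar G) {ε : ℝ} (hε : 0 < ε) :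
    ∃ c : G →₀ ℂ, ‖a - c.sum fun g z => z • lreg g‖ < ε := by
  unfold redCstar at ha
  have ha' : a ∈ closure (StarAlgebra.adjoin ℂ (range (lreg (G := G))) : Set (ℓ²(G, ℂ) →L[ℂ] ℓ²(G, ℂ))) := ha
  obtain ⟨b, hb, hab⟩ := Metric.mem_closure_iff.1 ha' ε hε
  obtain ⟨c, rfl⟩ := adjoin_span isPerm_lreg.one isPerm_lreg.mul isPerm_lreg.star_eq hb
  exact ⟨c, by rwa [← dist_eq_norm]⟩

open Classical in
/-- The point mass at `g`. -/
def dl {Ω : Type*} (g : Ω) : ℓ²(Ω, ℂ) := lp.single 2 g 1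

theorem norm_dl {Ω : Type*} (g : Ω) : ‖dl g‖ = 1 := by
  classical
  unfold dl
  rw [lp.norm_single (by norm_num)]; simp

theorem inner_dl {Ω : Type*} (g : Ω) (f : ℓ²(Ω, ℂ)) : inner ℂ (dl g) f = f g := by
  classical
  unfold dl
  rw [lp.inner_single_left]; simp

theorem perm_dl {G Ω : Type*} [Group G] [MulAction G Ω] {u : G → ℓ²(Ω, ℂ) →L[ℂ] ℓ²(Ω, ℂ)}
    (hu : IsPerm u) (g : G) (h : Ω) : u g (dl h) = dl (g • h) := by
  classical
  ext ω
  rw [hu]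
  unfold dl
  rw [lp.single_apply, lp.single_apply, Pi.single_apply, Pi.single_apply]
  simp only [inv_smul_eq_iff]

theorem op_eq_zero {Ω : Type*} {a : ℓ²(Ω, ℂ) →L[ℂ] ℓ²(Ω, ℂ)} (h : ∀ g, a (dl g) = 0) : a = 0 := by
  classical
  refine ContinuousLinearMap.ext fun f => ?_
  have h1 := (lp.hasSum_single (p := 2) (by norm_num) f).mapL a
  have h2 : (fun i => a (lp.single 2 i (f i))) = fun _ => 0 := by
    funext i
    have : lp.single (E := fun _ : Ω => ℂ) 2 i (f i) = f i • dl i := by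
      unfold dl
      rw [← lp.single_smul]
      simp
    rw [this, map_smul, h, smul_zero]
  rw [h2] at h1
  simpa using h1.unique hasSum_zero

theorem St.re {D : Type*} [CStarAlgebra D] {ψ : D → ℝ} (h : St ψ) (c : ℂ) : ψ (c • 1) = c.re := by
  have e : c • (1 : D) = (c.re : ℂ) • 1 + ((c.im : ℂ) * Complex.I) • 1 := by
    rw [← add_smul, Complex.re_add_im]
  rw [e, h.add, h.smul, h.one, h.skew]
  · simp
  · rw [star_smul, star_one, ← neg_smul]
    simp

theorem cstarSimple_of (hno : ¬ ∃ H : Subgroup G, IsAmenable H ∧ IsRecurrent H) :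
    IsCstarSimple G := by
  classical
  intro I hI
  by_cases htop : I = ⊤
  · exact Or.inr htop
  left
  have hcl := isClosed_redCstar (G := G)
  have : CompleteSpace (redCstar G) := hcl.completeSpace_coe
  let W : Submodule ℂ (ℓ²(G, ℂ) →L[ℂ] ℓ²(G, ℂ)) :=
    { carrier := {w | ∃ h : w ∈ redCstar G, (⟨w, h⟩ : redCstar G) ∈ I}
      add_mem' := by
        rintro a b ⟨ha, ha'⟩ ⟨hb, hb'⟩
        exact ⟨add_mem ha hb, I.add_mem ha' hb'⟩
      zero_mem' := ⟨zero_mem _, I.zero_mem⟩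
      smul_mem' := by
        rintro c a ⟨ha, ha'⟩
        refine ⟨(redCstar G).smul_mem ha c, ?_⟩
        have := I.mul_mem_left (c • 1) _ ha'
        rwa [smul_mul_assoc, one_mul] at this }
  have hWl : ∀ x ∈ redCstar G, ∀ w ∈ W, x * w ∈ W := by
    rintro x hx w ⟨hw, hw'⟩
    exact ⟨mul_mem hx hw, I.mul_mem_left ⟨x, hx⟩ _ hw'⟩
  have hWr : ∀ x ∈ redCstar G, ∀ w ∈ W, w * x ∈ W := by
    rintro x hx w ⟨hw, hw'⟩
    exact ⟨mul_mem hw hx, I.mul_mem_right _ ⟨x, hx⟩ hw'⟩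
  have hW : ∀ w ∈ W, 1 ≤ ‖1 - w‖ := by
    rintro w ⟨hw, hw'⟩
    by_contra hlt
    push Not at hlt
    apply htop
    have ht : ‖(1 - ⟨w, hw⟩ : redCstar G)‖ < 1 := hlt
    have hu := (Units.oneSub _ ht).isUnit
    rw [Units.val_oneSub, sub_sub_cancel] at hu
    obtain ⟨v, hv⟩ := hu.exists_right_inv
    have := I.mul_mem_right _ v hw'
    rw [hv] at this
    exact (TwoSidedIdeal.one_mem_iff I).1 this
  obtain ⟨N, y, hN, hy⟩ := exists_minIdeal G
  obtain ⟨M, hM, -⟩ := exists_cov (isPerm_lreg (G := G))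
  obtain ⟨ψ, hψ, hψW, -, hψ0⟩ := key_lemma hM hN hy id (extremePoints_subset hy)
    (by intro g ω f _; simp only [id, smul_eq_mul, mul_assoc]) W hW (by
      intro g w hw
      refine hWr _ (lreg_mem g) _ (hWl _ ?_ _ hw)
      exact star_mem (lreg_mem g))
  have hnr : ¬ IsRecurrent (stab y) := fun hr => hno ⟨_, stab_amenable (hN.mean _ (extremePoints_subset hy)), hr⟩
  rw [isRecurrent_iff] at hnr
  push Not at hnr
  have hτ : ∀ a ∈ W, (inner ℂ (dl (1 : G)) (a (dl (1 : G)))).re = 0 := by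
    intro a ha
    have key : ∀ ε > 0, |(inner ℂ (dl (1 : G)) (a (dl (1 : G)))).re| ≤ 2 * ε := by
      intro ε hε
      obtain ⟨c, hc⟩ := redCstar_approx ha.1 hε
      set x := c.sum fun g z => z • lreg g with hx
      obtain ⟨g, hg⟩ := hnr (c.support.erase 1) (by simp)
      have hxs : x = ∑ s ∈ c.support, c s • lreg s := rfl
      have e1 : star (lreg g) * x * lreg g = ∑ s ∈ c.support, c s • lreg (g⁻¹ * s * g) := by
        rw [hxs, Finset.mul_sum, Finset.sum_mul]
        refine Finset.sum_congr rfl fun s _ => ?_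
        rw [mul_smul_comm, smul_mul_assoc, isPerm_lreg.star_eq, ← isPerm_lreg.mul, ← isPerm_lreg.mul]
      have hsum : ∀ (S : Finset G) (f : G → ℓ²(G, ℂ) →L[ℂ] ℓ²(G, ℂ)), ψ (∑ s ∈ S, f s) = ∑ s ∈ S, ψ (f s) := by
        intro S f
        induction S using Finset.induction_on with
        | empty => simpa using hψ.smul 0 0
        | insert a S ha ih => rw [Finset.sum_insert ha, Finset.sum_insert ha, hψ.add, ih]
      have e2 : ψ (star (lreg g) * x * lreg g) = (c 1).re := by
        rw [e1, hsum, Finset.sum_eq_single 1]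
        · rw [mul_one, inv_mul_cancel, isPerm_lreg.one, hψ.re]
        · intro s hs h1
          refine hψ0 _ (fun h => ?_) _
          refine hg s (by simp [h1, Finsupp.mem_support_iff.1 hs]) ?_
          rw [mem_conjSub]
          exact h
        · intro h
          have : c 1 = 0 := by simpa using h
          rw [this, zero_smul]
          simpa using hψ.smul 0 0
      have e3 : ψ (star (lreg g) * a * lreg g) = 0 :=
        hψW _ (hWr _ (lreg_mem g) _ (hWl _ (star_mem (lreg_mem g)) _ ha))
      have e4 : |(c 1).re| ≤ ε := by
        have : (c 1).re = - ψ (star (lreg g) * (a - x) * lreg g) := by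
          rw [mul_sub, sub_mul, hψ.sub, e2, e3]; ring
        rw [this, abs_neg]
        refine (hψ.abs_le _).trans ?_
        calc ‖star (lreg g) * (a - x) * lreg g‖ ≤ ‖star (lreg g)‖ * ‖a - x‖ * ‖lreg g‖ :=
              (norm_mul_le _ _).trans (by gcongr; exact norm_mul_le _ _)
          _ ≤ 1 * ‖a - x‖ * 1 := by rw [isPerm_lreg.star_eq]; gcongr <;> exact hM.unorm _
          _ ≤ ε := by rw [one_mul, mul_one]; exact hc.le
      have e5 : inner ℂ (dl (1 : G)) (x (dl (1 : G))) = c 1 := by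
        rw [inner_dl, hxs, sum_apply]
        have : ∀ s, (c s • lreg s) (dl (1 : G)) = c s • dl s := by
          intro s
          rw [smul_apply, perm_dl isPerm_lreg]; simp
        simp only [this]
        rw [lp.coeFn_sum, Finset.sum_apply]
        have h2 : ∀ s, (c s • dl s : ℓ²(G, ℂ)) 1 = if s = 1 then c s else 0 := by
          intro s
          rw [lp.coeFn_smul, Pi.smul_apply]
          unfold dl
          rw [lp.single_apply, Pi.single_apply]
          simp [eq_comm]
        simp only [h2]
        simp +contextual
      have e6 : |(inner ℂ (dl (1 : G)) (a (dl (1 : G)))).re - (c 1).re| ≤ ε := by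
        rw [← e5, ← Complex.sub_re, ← inner_sub_right, ← sub_apply]
        refine (Complex.abs_re_le_norm _).trans ((norm_inner_le_norm _ _).trans ?_)
        rw [norm_dl, one_mul]
        refine ((a - x).le_opNorm _).trans ?_
        rw [norm_dl, mul_one]
        exact hc.le
      have := abs_le.1 e4
      have := abs_le.1 e6
      rw [abs_le]
      constructor <;> linarith
    by_contra hne
    have := key (|(inner ℂ (dl (1 : G)) (a (dl (1 : G)))).re| / 4) (by positivity)
    have h0 : 0 < |(inner ℂ (dl (1 : G)) (a (dl (1 : G)))).re| := abs_pos.2 hne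
    linarith
  have hzero : ∀ a ∈ W, a = 0 := by
    intro a ha
    refine op_eq_zero fun g => ?_
    ext h
    have hmem : lreg h⁻¹ * a * lreg g ∈ W := hWr _ (lreg_mem g) _ (hWl _ (lreg_mem _) _ ha)
    have e : inner ℂ (dl (1 : G)) ((lreg h⁻¹ * a * lreg g) (dl (1 : G))) = a (dl g) h := by
      rw [inner_dl, mul_apply_eq_comp, mul_apply_eq_comp, perm_dl isPerm_lreg, isPerm_lreg]
      simp
    have h1 := hτ _ hmem
    have h2 := hτ _ (W.smul_mem Complex.I hmem)
    rw [smul_apply, inner_smul_right, e] at h2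
    rw [e] at h1
    refine Complex.ext h1 ?_
    simpa using h2
  rw [eq_bot_iff]
  intro a ha
  have : (a : ℓ²(G, ℂ) →L[ℂ] ℓ²(G, ℂ)) = 0 := hzero _ ⟨a.2, ha⟩
  rw [TwoSidedIdeal.mem_bot]
  exact Subtype.ext this

end Simple

section Day
open Set

theorem day {H : Type*} [Group H] (hH : IsAmenable H) (S : Finset H) {ε : ℝ} (hε : 0 < ε) :
    ∃ p : H →₀ ℝ, (∀ k, 0 ≤ p k) ∧ (p.sum fun _ r => r) = 1 ∧
      ∀ s ∈ S, ∀ A : Finset H, ∑ k ∈ A, |p (s⁻¹ * k) - p k| ≤ ε := by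
  classical
  obtain ⟨m, hm, hinv⟩ := hH.exists_mean
  have hfin : ∀ p : H →₀ ℝ,
      (Function.support fun x : S × H => p ((x.1 : H)⁻¹ * x.2) - p x.2).Finite := by
    intro p
    have hfin1 : (⋃ s : S, (fun k => (s, (s : H) * k)) '' (p.support : Set H) ∪
        (fun k => (s, k)) '' (p.support : Set H)).Finite := by
      refine Set.finite_iUnion fun s => ?_
      exact (p.support.finite_toSet.image _).union (p.support.finite_toSet.image _)
    refine hfin1.subset ?_
    rintro ⟨s, k⟩ hx
    rw [Set.mem_iUnion]
    refine ⟨s, ?_⟩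
    by_cases h1 : p k = 0
    · left
      refine ⟨(s : H)⁻¹ * k, ?_, by simp⟩
      rw [Finset.mem_coe, Finsupp.mem_support_iff]
      intro h2
      exact hx (by simp [h1, h2])
    · right
      exact ⟨k, by simpa using h1, rfl⟩
  have hmem : ∀ p : H →₀ ℝ, Memℓp (fun x : S × H => p ((x.1 : H)⁻¹ * x.2) - p x.2) 1 := by
    intro p
    have := memℓp_zero (hfin p)
    exact this.of_exponent_ge (by norm_num)
  let T : (H →₀ ℝ) →ₗ[ℝ] lp (fun _ : S × H => ℝ) 1 :=
    { toFun := fun p => ⟨fun x => p ((x.1 : H)⁻¹ * x.2) - p x.2, hmem p⟩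
      map_add' := by
        intro p q
        refine Subtype.ext (funext fun x => ?_)
        show (p + q) _ - (p + q) _ = (p _ - p _) + (q _ - q _)
        simp only [Finsupp.add_apply]; ring
      map_smul' := by
        intro c p
        refine Subtype.ext (funext fun x => ?_)
        show (c • p) _ - (c • p) _ = c * (p _ - p _)
        simp only [Finsupp.smul_apply, smul_eq_mul]; ring }
  let Δ : Set (H →₀ ℝ) := {p | (∀ k, 0 ≤ p k) ∧ (Finsupp.lsum ℝ (fun _ : H => LinearMap.id (R := ℝ) (M := ℝ))) p = 1}
  have hΔ : Convex ℝ Δ := by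
    rintro p ⟨hp, hp1⟩ q ⟨hq, hq1⟩ a b ha hb hab
    refine ⟨fun k => ?_, ?_⟩
    · have := hp k
      have := hq k
      simp only [Finsupp.add_apply, Finsupp.smul_apply, smul_eq_mul]
      positivity
    · rw [map_add, map_smul, map_smul, hp1, hq1]
      simpa using hab
  have hC : Convex ℝ (T '' Δ) := hΔ.linear_image T
  have h0 : (0 : lp (fun _ : S × H => ℝ) 1) ∈ closure (T '' Δ) := by
    by_contra hnot
    obtain ⟨f, c, hf0, hfc⟩ := geometric_hahn_banach_point_closed hC.closure isClosed_closure hnot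
    rw [map_zero] at hf0
    have hTk : ∀ k, T (Finsupp.single k 1) =
        ∑ s : S, (lp.single 1 (s, (s : H) * k) (1 : ℝ) - lp.single 1 (s, k) (1 : ℝ)) := by
      intro k
      refine Subtype.ext (funext fun x => ?_)
      rw [lp.coeFn_sum, Finset.sum_apply]
      simp only [lp.coeFn_sub, Pi.sub_apply]
      show (Finsupp.single k (1 : ℝ)) _ - (Finsupp.single k (1 : ℝ)) _ = _
      rw [Finset.sum_eq_single x.1]
      · rw [lp.single_apply, lp.single_apply, Pi.single_apply, Pi.single_apply,
          Finsupp.single_apply, Finsupp.single_apply]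
        rcases x with ⟨s, h⟩
        simp only [Prod.mk.injEq, true_and, eq_inv_mul_iff_mul_eq, eq_comm]
      · intro s _ hs
        rw [lp.single_apply_ne, lp.single_apply_ne, sub_zero]
        · intro h; exact hs (by rw [h])
        · intro h; exact hs (by rw [h])
      · simp
    have hge : ∀ k, c ≤ f (T (Finsupp.single k 1)) := by
      intro k
      refine (hfc _ (subset_closure ⟨_, ⟨?_, ?_⟩, rfl⟩)).le
      · intro j
        rw [Finsupp.single_apply]
        split_ifs <;> norm_num
      · simp
    let φ : S → H → ℝ := fun s k => f (lp.single 1 (s, k) (1 : ℝ))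
    have hφ : ∀ s, Bd (φ s) := by
      intro s
      refine ⟨‖f‖, fun k => ?_⟩
      have := f.le_opNorm (lp.single 1 (s, k) (1 : ℝ))
      rw [lp.norm_single (by norm_num)] at this
      simpa using this
    have hfe : ∀ k, f (T (Finsupp.single k 1)) = ∑ s ∈ Finset.univ, (φ s ((s : H) * k) - φ s k) := by
      intro k
      rw [hTk, map_sum]
      simp only [map_sub, φ]
    obtain ⟨hB, hs⟩ := hm.sum Finset.univ (fun s k => φ s ((s : H) * k) - φ s k)
      (fun s => ((hφ s).comp _).sub (hφ s))
    have hs0 : m (fun k => ∑ s ∈ Finset.univ, (φ s ((s : H) * k) - φ s k)) = 0 := by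
      rw [hs]
      refine Finset.sum_eq_zero fun s _ => ?_
      rw [hm.sub ((hφ s).comp _) (hφ s), hinv _ _ (hφ s), sub_self]
    have hle := hm.mono (Bd.const c) hB (fun k => by rw [← hfe]; exact hge k)
    rw [hm.const, hs0] at hle
    linarith
  obtain ⟨_, ⟨p, ⟨hp0, hp1⟩, rfl⟩, hlt⟩ := Metric.mem_closure_iff.1 h0 ε hε
  rw [dist_zero_left] at hlt
  refine ⟨p, hp0, hp1, fun s hs A => ?_⟩
  have := lp.sum_rpow_le_norm_rpow (p := 1) (by norm_num) (T p)
    (A.map ⟨fun k => ((⟨s, hs⟩ : S), k), fun a b h => by simpa using h⟩)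
  rw [Finset.sum_map] at this
  simp only [ENNReal.toReal_one, Real.rpow_one] at this
  exact this.trans hlt.le

open Classical in
theorem weak_containment {G : Type u} [Group G] {K : Subgroup G} (hK : IsAmenable K)
    (S : Finset G) {ε : ℝ} (hε : 0 < ε) :
    ∃ ξ : ℓ²(G, ℂ), ‖ξ‖ = 1 ∧
      ∀ g ∈ S, ‖inner ℂ ξ (lreg g ξ) - (if g ∈ K then 1 else 0)‖ ≤ ε := by
  obtain ⟨p, hp0, hp1, hp⟩ := day hK (S.subtype (· ∈ K)) (ε := ε ^ 2) (by positivity)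
  let q : G → ℝ := fun g => if h : g ∈ K then p ⟨g, h⟩ else 0
  have hq : ∀ k : K, q k = p k := fun k => by simp [q]
  have hq0 : ∀ g ∉ K, q g = 0 := fun g hg => by simp [q, hg]
  have hqn : ∀ g, 0 ≤ q g := by
    intro g
    by_cases h : g ∈ K
    · rw [hq ⟨g, h⟩]; exact hp0 _
    · rw [hq0 g h]
  have hqs : Function.support q ⊆ (p.support.map (Function.Embedding.subtype _) : Finset G) := by
    intro g hg
    by_cases h : g ∈ K
    · have : q g = p ⟨g, h⟩ := hq ⟨g, h⟩
      rw [Function.mem_support, this] at hg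
      simp [h, hg]
    · exact (hg (hq0 g h)).elim
  have hqsum : ∑' g, q g = 1 := by
    rw [tsum_eq_sum (s := p.support.map (Function.Embedding.subtype _)), Finset.sum_map]
    · rw [← hp1]
      exact Finset.sum_congr rfl fun k _ => hq k
    · intro g hg
      by_contra h
      exact hg (hqs h)
  have hsq : ∀ g, ‖((Real.sqrt (q g) : ℝ) : ℂ)‖ ^ (2 : ℝ≥0∞).toReal = q g := by
    intro g
    rw [Complex.norm_real, Real.norm_of_nonneg (Real.sqrt_nonneg _)]
    norm_num
    exact Real.sq_sqrt (hqn g)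
  have hmem : Memℓp (fun g => ((Real.sqrt (q g) : ℝ) : ℂ)) 2 := by
    refine memℓp_gen ?_
    simp only [hsq]
    exact summable_of_hasFiniteSupport ((Finset.finite_toSet _).subset hqs)
  let ξ : ℓ²(G, ℂ) := ⟨fun g => ((Real.sqrt (q g) : ℝ) : ℂ), hmem⟩
  have hξ : ∀ g, ξ g = ((Real.sqrt (q g) : ℝ) : ℂ) := fun g => rfl
  have hξn : ‖ξ‖ = 1 := by
    rw [lp.norm_eq_tsum_rpow (by norm_num)]
    simp only [hξ, hsq, hqsum]
    simp
  refine ⟨ξ, hξn, fun g hg => ?_⟩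
  split_ifs with hgK
  · have h1 : (1 : ℂ) = inner ℂ ξ ξ := by
      rw [inner_self_eq_norm_sq_to_K, hξn]; simp
    rw [h1, ← inner_sub_right]
    refine (norm_inner_le_norm _ _).trans ?_
    rw [hξn, one_mul]
    refine lp.norm_le_of_forall_sum_le (by norm_num) hε.le fun A => ?_
    have hb : ∀ h, ‖(lreg g ξ - ξ : ℓ²(G, ℂ)) h‖ ^ (2 : ℝ≥0∞).toReal ≤ |q (g⁻¹ * h) - q h| := by
      intro h
      rw [lp.coeFn_sub, Pi.sub_apply, isPerm_lreg, hξ, hξ, ← Complex.ofReal_sub, Complex.norm_real]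
      norm_num
      have ha := hqn (g⁻¹ * h)
      have hb := hqn h
      set a := q (g⁻¹ * h)
      set b := q h
      have e1 := Real.sq_sqrt ha
      have e2 := Real.sq_sqrt hb
      have n1 := Real.sqrt_nonneg a
      have n2 := Real.sqrt_nonneg b
      rcases le_total a b with hab | hab
      · have := Real.sqrt_le_sqrt hab
        rw [abs_of_nonpos (by linarith)]
        nlinarith
      · have := Real.sqrt_le_sqrt hab
        rw [abs_of_nonneg (by linarith)]
        nlinarith
    refine (Finset.sum_le_sum fun h _ => hb h).trans ?_
    have h2 := hp ⟨g, hgK⟩ (by simpa using hg) (A.subtype (· ∈ K))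
    have h3 : ∑ k ∈ A.subtype (· ∈ K), |p ((⟨g, hgK⟩ : K)⁻¹ * k) - p k| =
        ∑ k ∈ A.subtype (· ∈ K), (fun h => |q (g⁻¹ * h) - q h|) k := by
      refine Finset.sum_congr rfl fun k _ => ?_
      simp only
      rw [← hq, ← hq]; rfl
    rw [h3, Finset.sum_subtype_eq_sum_filter (fun h => |q (g⁻¹ * h) - q h|)] at h2
    rw [← Finset.sum_filter_of_ne (p := fun h => h ∈ K)]
    · refine h2.trans ?_
      norm_num
    · intro h _ hne
      by_contra hk
      apply hne
      rw [hq0 h hk, hq0 (g⁻¹ * h), sub_zero, abs_zero]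
      intro h'
      exact hk (by simpa using K.mul_mem hgK h')
  · have : inner ℂ ξ (lreg g ξ) = 0 := by
      rw [lp.inner_eq_tsum]
      convert tsum_zero with h
      rw [isPerm_lreg, hξ, hξ]
      by_cases hk : h ∈ K
      · rw [hq0 (g⁻¹ • h)]
        · simp
        · intro h'
          apply hgK
          have := K.mul_mem hk (K.inv_mem h')
          simpa using this
      · rw [hq0 h hk]; simp
    rw [this]; simpa using hε.le

end Day

section Dom
open Set

theorem simple_dom {G A B : Type*} [Group G] [CStarAlgebra A] [CStarAlgebra B]
    {a : G → A} {b : G → B} (ha1 : a 1 = 1) (ham : ∀ g h, a (g * h) = a g * a h)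
    (has : ∀ g, star (a g) = a g⁻¹) (hb1 : b 1 = 1) (hbm : ∀ g h, b (g * h) = b g * b h)
    (hbs : ∀ g, star (b g) = b g⁻¹) (R : StarSubalgebra ℂ A) (hR : IsClosed (R : Set A))
    (haR : ∀ g, a g ∈ R)
    (happ : ∀ x ∈ R, ∀ ε > 0, ∃ c : G →₀ ℂ, ‖x - c.sum fun g z => z • a g‖ < ε)
    (hsimple : ∀ I : TwoSidedIdeal R, IsClosed (I : Set R) → I = ⊥ ∨ I = ⊤)
    (p : B →L[ℂ] ℂ) (hp1 : p 1 = 1)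
    (hp : ∀ c : G →₀ ℂ, ‖p (c.sum fun g z => z • b g)‖ ≤ ‖c.sum fun g z => z • a g‖)
    (c : G →₀ ℂ) : ‖c.sum fun g z => z • a g‖ ≤ ‖c.sum fun g z => z • b g‖ := by
  let v : G → A × B := fun g => (a g, b g)
  have hv : ∀ c : G →₀ ℂ, (c.sum fun g z => z • v g) =
      (c.sum fun g z => z • a g, c.sum fun g z => z • b g) := by
    intro c
    simp only [Finsupp.sum]
    refine Prod.ext ?_ ?_
    · rw [Prod.fst_sum]; rfl
    · rw [Prod.snd_sum]; rfl
  let T : StarSubalgebra ℂ (A × B) := (StarAlgebra.adjoin ℂ (range v)).topologicalClosure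
  have hT : IsClosed (T : Set (A × B)) := StarSubalgebra.isClosed_topologicalClosure _
  have hvT : ∀ c : G →₀ ℂ, (c.sum fun g z => z • v g) ∈ T := by
    intro c
    refine StarSubalgebra.le_topologicalClosure _ (sum_mem fun g _ => ?_)
    exact SMulMemClass.smul_mem _ (StarAlgebra.subset_adjoin ℂ _ ⟨g, rfl⟩)
  have hTapp : ∀ x ∈ T, ∀ ε > 0, ∃ c : G →₀ ℂ, ‖x - c.sum fun g z => z • v g‖ < ε := by
    intro x hx ε hε
    have hx' : x ∈ closure (StarAlgebra.adjoin ℂ (range v) : Set (A × B)) := hx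
    obtain ⟨y, hy, hxy⟩ := Metric.mem_closure_iff.1 hx' ε hε
    obtain ⟨c, rfl⟩ := adjoin_span (v := v) (by simp only [v, ha1, hb1]; rfl)
      (by intro g h; simp only [v, ham, hbm]; rfl)
      (by intro g; simp only [v, ← has, ← hbs]; rfl) hy
    exact ⟨c, by rwa [← dist_eq_norm]⟩
  have hTp : ∀ x ∈ T, ‖p x.2‖ ≤ ‖x.1‖ := by
    have hsub : (StarAlgebra.adjoin ℂ (range v) : Set (A × B)) ⊆ {x | ‖p x.2‖ ≤ ‖x.1‖} := by
      intro y hy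
      obtain ⟨c, rfl⟩ := adjoin_span (v := v) (by simp only [v, ha1, hb1]; rfl)
        (by intro g h; simp only [v, ham, hbm]; rfl)
        (by intro g; simp only [v, ← has, ← hbs]; rfl) hy
      rw [hv]; exact hp c
    exact closure_minimal hsub 
      (isClosed_le (f := fun x : A × B => ‖p x.2‖) (g := fun x : A × B => ‖x.1‖)
        (by fun_prop) (by fun_prop))
  have hT1 : ∀ x ∈ T, x.1 ∈ R := by
    have hsub : (StarAlgebra.adjoin ℂ (range v) : Set (A × B)) ⊆ {x | x.1 ∈ R} := by
      intro y hy
      obtain ⟨c, rfl⟩ := adjoin_span (v := v) (by simp only [v, ha1, hb1]; rfl)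
        (by intro g h; simp only [v, ham, hbm]; rfl)
        (by intro g; simp only [v, ← has, ← hbs]; rfl) hy
      rw [hv]
      exact sum_mem fun g _ => SMulMemClass.smul_mem _ (haR g)
    exact closure_minimal hsub (hR.preimage continuous_fst)
  have hl : ∀ x ∈ R, ∀ y : A, (y, (0 : B)) ∈ T → (x * y, (0 : B)) ∈ T := by
    intro x hx y hy
    have hcl : IsClosed {x : A | (x * y, (0 : B)) ∈ T} := hT.preimage (by fun_prop)
    refine hcl.closure_subset (Metric.mem_closure_iff.2 fun ε hε => ?_)
    obtain ⟨c, hc⟩ := happ x hx ε hε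
    refine ⟨_, ?_, by rw [dist_eq_norm]; exact hc⟩
    have := mul_mem (hvT c) hy
    rw [hv] at this
    simpa using this
  have hr : ∀ x ∈ R, ∀ y : A, (y, (0 : B)) ∈ T → (y * x, (0 : B)) ∈ T := by
    intro x hx y hy
    have hcl : IsClosed {x : A | (y * x, (0 : B)) ∈ T} := hT.preimage (by fun_prop)
    refine hcl.closure_subset (Metric.mem_closure_iff.2 fun ε hε => ?_)
    obtain ⟨c, hc⟩ := happ x hx ε hε
    refine ⟨_, ?_, by rw [dist_eq_norm]; exact hc⟩
    have := mul_mem hy (hvT c)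
    rw [hv] at this
    simpa using this
  let I : TwoSidedIdeal R := TwoSidedIdeal.mk' {x : R | ((x : A), (0 : B)) ∈ T}
    (by show ((0 : A), (0 : B)) ∈ T; exact zero_mem T)
    (by intro x y hx hy
        have := add_mem (show ((x : A), (0 : B)) ∈ T from hx) (show ((y : A), (0 : B)) ∈ T from hy)
        simpa using this)
    (by intro x hx
        have := neg_mem (show ((x : A), (0 : B)) ∈ T from hx)
        simpa using this)
    (by intro x y hy; exact hl x x.2 y hy)
    (by intro x y hx; exact hr y y.2 x hx)
  have hI : ∀ x : R, x ∈ I ↔ ((x : A), (0 : B)) ∈ T := fun x => TwoSidedIdeal.mem_mk' _ _ _ _ _ _ x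
  have hIcl : IsClosed (I : Set R) := by
    have : (I : Set R) = (fun x : R => ((x : A), (0 : B))) ⁻¹' (T : Set (A × B)) := by
      ext x; exact hI x
    rw [this]
    exact hT.preimage (by fun_prop)
  have hbot : I = ⊥ := by
    refine (hsimple I hIcl).resolve_right fun htop => ?_
    have h1 : ((1 : A), (0 : B)) ∈ T := (hI 1).1 (by rw [htop]; trivial)
    have h2 := hTp _ (sub_mem (one_mem T) h1)
    simp [hp1] at h2
    linarith
  have hinj : ∀ x ∈ T, x.2 = 0 → x = 0 := by
    intro x hx h0
    have hxR := hT1 x hx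
    have : (⟨x.1, hxR⟩ : R) ∈ I := by
      rw [hI]
      show (x.1, (0 : B)) ∈ T
      rw [← h0]; exact hx
    rw [hbot, TwoSidedIdeal.mem_bot] at this
    exact Prod.ext (congrArg Subtype.val this) h0
  have : IsClosed (T : Set (A × B)) := hT
  let φ : T →⋆ₐ[ℂ] B := (StarAlgHom.snd ℂ A B).comp T.subtype
  have hφ : Function.Injective φ := by
    rw [injective_iff_map_eq_zero]
    intro x hx
    exact Subtype.ext (hinj x x.2 hx)
  have := NonUnitalStarAlgHom.norm_map φ hφ ⟨_, hvT c⟩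
  have h2 : ‖c.sum fun g z => z • b g‖ = ‖(c.sum fun g z => z • v g)‖ := by
    have e : φ ⟨_, hvT c⟩ = c.sum fun g z => z • b g := by
      show (c.sum fun g z => z • v g).2 = _
      rw [hv]
    rw [← e, this]; rfl
  rw [h2, hv]
  exact norm_fst_le (c.sum fun g z => z • a g, c.sum fun g z => z • b g)

theorem dl_self {Ω : Type*} (g : Ω) : dl g g = 1 := by
  classical
  unfold dl
  rw [lp.single_apply, Pi.single_apply]; simp

theorem dl_ne {Ω : Type*} {g h : Ω} (hne : h ≠ g) : dl g h = 0 := by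
  classical
  unfold dl
  rw [lp.single_apply, Pi.single_apply]; simp [hne]

theorem dom_perm {G : Type u} [Group G] (hG : IsCstarSimple G) {K : Subgroup G}
    (hK : IsAmenable K) {π : G → ℓ²(G ⧸ K, ℂ) →L[ℂ] ℓ²(G ⧸ K, ℂ)} (hπ : IsPerm π) (c : G →₀ ℂ) :
    ‖c.sum fun g z => z • lreg g‖ ≤ ‖c.sum fun g z => z • π g‖ := by
  classical
  let o : G ⧸ K := ((1 : G) : G ⧸ K)
  let p : (ℓ²(G ⧸ K, ℂ) →L[ℂ] ℓ²(G ⧸ K, ℂ)) →L[ℂ] ℂ :=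
    (innerSL ℂ (dl o)).comp (ContinuousLinearMap.apply ℂ _ (dl o))
  have hp : ∀ x, p x = inner ℂ (dl o) (x (dl o)) := fun x => rfl
  have hpg : ∀ g, p (π g) = if g ∈ K then 1 else 0 := by
    intro g
    rw [hp, perm_dl hπ, inner_dl]
    have : g • o = ((g : G) : G ⧸ K) := by
      show ((g * 1 : G) : G ⧸ K) = _
      rw [mul_one]
    rw [this]
    by_cases hg : g ∈ K
    · rw [if_pos hg]
      have h2 : ((g : G) : G ⧸ K) = o := QuotientGroup.eq.2 (by simpa using hg)
      rw [h2, dl_self]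
    · rw [if_neg hg, dl_ne]
      intro h2
      exact hg (by simpa using QuotientGroup.eq.1 h2)
  refine simple_dom isPerm_lreg.one isPerm_lreg.mul isPerm_lreg.star_eq hπ.one hπ.mul hπ.star_eq
    (redCstar G) isClosed_redCstar lreg_mem (fun x hx ε hε => redCstar_approx hx hε) hG p
    ?_ ?_ c
  · rw [hp, one_apply_eq_self, inner_self_eq_norm_sq_to_K, norm_dl]; simp
  · intro c
    refine le_of_forall_pos_le_add fun ε hε => ?_
    have hC : 0 < 1 + ∑ g ∈ c.support, ‖c g‖ :=
      add_pos_of_pos_of_nonneg one_pos (Finset.sum_nonneg fun g _ => norm_nonneg _)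
    obtain ⟨ξ, hξ, h⟩ := weak_containment hK c.support (div_pos hε hC)
    set x := c.sum fun g z => z • lreg g with hx
    have hxs : x = ∑ s ∈ c.support, c s • lreg s := rfl
    have e1 : p (c.sum fun g z => z • π g) = ∑ g ∈ c.support, c g * (if g ∈ K then 1 else 0) := by
      simp only [Finsupp.sum, map_sum, map_smul, hpg, smul_eq_mul]
    have e2 : inner ℂ ξ (x ξ) = ∑ g ∈ c.support, c g * inner ℂ ξ (lreg g ξ) := by
      rw [hxs, sum_apply, inner_sum]
      simp only [smul_apply, inner_smul_right]
    have e3 : ‖inner ℂ ξ (x ξ)‖ ≤ ‖x‖ := by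
      refine (norm_inner_le_norm _ _).trans ?_
      rw [hξ, one_mul]
      refine (x.le_opNorm _).trans ?_
      rw [hξ, mul_one]
    have e4 : ‖p (c.sum fun g z => z • π g) - inner ℂ ξ (x ξ)‖ ≤ ε := by
      rw [e1, e2, ← Finset.sum_sub_distrib]
      calc _ ≤ ∑ g ∈ c.support, ‖c g‖ * (ε / (1 + ∑ g ∈ c.support, ‖c g‖)) := by
            refine norm_sum_le_of_le _ fun g hg => ?_
            rw [← mul_sub, norm_mul, norm_sub_rev]
            gcongr
            exact h g hg
        _ = (∑ g ∈ c.support, ‖c g‖) / (1 + ∑ g ∈ c.support, ‖c g‖) * ε := by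
            rw [← Finset.sum_mul]; ring
        _ ≤ 1 * ε := by
            gcongr
            rw [div_le_one hC]; linarith
        _ = ε := one_mul _
    calc _ = ‖inner ℂ ξ (x ξ) + (p (c.sum fun g z => z • π g) - inner ℂ ξ (x ξ))‖ := by
          rw [add_sub_cancel]
      _ ≤ _ := (norm_add_le _ _).trans (add_le_add e3 e4)

theorem dist_span {G : Type u} [Group G] (hG : IsCstarSimple G) {K : Subgroup G}
    (hK : IsAmenable K) {π : G → ℓ²(G ⧸ K, ℂ) →L[ℂ] ℓ²(G ⧸ K, ℂ)} (hπ : IsPerm π)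
    {w : ℓ²(G ⧸ K, ℂ) →L[ℂ] ℓ²(G ⧸ K, ℂ)}
    (hw : w ∈ Submodule.span ℂ (π '' {g | g ≠ 1})) : 1 ≤ ‖1 - w‖ := by
  classical
  rw [Finsupp.mem_span_image_iff_linearCombination] at hw
  obtain ⟨c, hc, rfl⟩ := hw
  have hc1 : c 1 = 0 := by
    rw [Finsupp.mem_supported] at hc
    by_contra h
    exact hc (Finsupp.mem_support_iff.2 h) rfl
  have h := dom_perm hG hK hπ (Finsupp.single 1 1 - c)
  have e : ∀ {Ω : Type u} (v : G → ℓ²(Ω, ℂ) →L[ℂ] ℓ²(Ω, ℂ)), v 1 = 1 →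
      ((Finsupp.single 1 1 - c).sum fun g z => z • v g) = 1 - Finsupp.linearCombination ℂ v c := by
    intro Ω v hv
    rw [← Finsupp.linearCombination_apply, map_sub, Finsupp.linearCombination_single, hv, one_smul]
  rw [e _ hπ.one, e _ isPerm_lreg.one] at h
  refine le_trans ?_ h
  have e2 : inner ℂ (dl (1 : G)) ((1 - Finsupp.linearCombination ℂ lreg c) (dl (1 : G))) = 1 := by
    rw [sub_apply, inner_sub_right, one_apply_eq_self, inner_self_eq_norm_sq_to_K, norm_dl]
    have : inner ℂ (dl (1 : G)) ((Finsupp.linearCombination ℂ lreg c) (dl (1 : G))) = 0 := by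
      rw [Finsupp.linearCombination_apply, Finsupp.sum, sum_apply, inner_sum]
      refine Finset.sum_eq_zero fun g hg => ?_
      have hg1 : g ≠ 1 := fun h => by simp [h, hc1] at hg
      rw [smul_apply, inner_smul_right, perm_dl isPerm_lreg, inner_dl]
      unfold dl
      rw [lp.single_apply, Pi.single_apply]
      simp [hg1.symm]
    rw [this]; simp
  have e3 := norm_inner_le_norm (𝕜 := ℂ) (dl (1 : G))
    ((1 - Finsupp.linearCombination ℂ lreg c) (dl (1 : G)))
  rw [e2, norm_dl, one_mul] at e3
  have e4 := (1 - Finsupp.linearCombination ℂ lreg c).le_opNorm (dl (1 : G))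
  rw [norm_dl, mul_one] at e4
  simpa using e3.trans e4

end Dom

section Forward
open Set

theorem fixed_of_recurrent {G : Type u} [Group G] {H : Subgroup G} (hH : IsAmenable H)
    {F : Finset G} (hF : ∀ g, ∃ s ∈ F, s ∈ conjSub g H) {N : Set ((G → ℝ) → ℝ)}
    (hN : MinIdeal N) {y : (G → ℝ) → ℝ} (hy : y ∈ extremePoints ℝ N) :
    ∃ i ∈ F, tr i y = y := by
  classical
  have hyN := extremePoints_subset hy
  have hym := hN.mean _ hyN
  obtain ⟨m₀, hm₀, hinv⟩ := hH.exists_mean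
  obtain ⟨m₁, hm₁, hpush⟩ := hm₀.pushforward (fun h : H => (h : G))
  set q := conv m₁ y with hq
  have hqN : q ∈ N := hN.ideal _ _ hm₁ hyN
  have hqm := hN.mean _ hqN
  have hqf : ∀ f, Bd f → q f = m₀ (fun k : H => y (fun h => f ((k : G) * h))) := by
    intro f hf
    show m₁ _ = _
    rw [hpush _ (bd_conv hym hf)]
  have hqinv : ∀ h ∈ H, ∀ f, Bd f → q (fun k => f (h * k)) = q f := by
    intro h hh f hf
    rw [hqf _ (bd_left hf h), hqf f hf,
      ← hinv ⟨h, hh⟩ _ ((bd_conv hym hf).comp (fun k : H => (k : G)))]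
    congr 1
    funext k
    simp [mul_assoc]
  obtain ⟨m, hm, hyq⟩ := hN.trans _ hqN _ hyN
  choose i hiF hi using hF
  let k : G → G → ℝ := fun j g => if i g = j then 1 else 0
  have hk : ∀ j, Bd (k j) := fun j => ⟨1, fun g => by simp only [k]; split_ifs <;> simp⟩
  have hsum := (hm.sum F k hk).2
  have hone : (fun g => ∑ j ∈ F, k j g) = fun _ => 1 := by
    funext g
    simp only [k]
    rw [Finset.sum_ite_eq, if_pos (hiF g)]
  rw [hone, hm.one] at hsum
  obtain ⟨j, hjF, hj⟩ := Finset.exists_ne_zero_of_sum_ne_zero (hsum ▸ one_ne_zero)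
  refine ⟨j, hjF, mean_ext (hN.mean _ (hN.tr_mem j hyN)) hym fun f hf => ?_⟩
  have hb : ∀ f, Bd f → m (fun ω => q (fun h => f (id ω * h))) = y f := by
    intro f _
    conv_rhs => rw [hyq]
    rfl
  have e1 := bauer hN hy hm id hqN hb (k j) (hk j) f hf
  have e2 := bauer hN hy hm id hqN hb (k j) (hk j) (fun h => f (j * h)) (bd_left hf j)
  have e3 : (fun ω => k j ω * q (fun h => f (j * (id ω * h)))) =
      fun ω => k j ω * q (fun h => f (id ω * h)) := by
    funext g
    by_cases hg : i g = j
    · congr 1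
      have h1 := hi g
      rw [hg, mem_conjSub] at h1
      have h2 := hqinv _ h1 (fun h => f (g * h)) (bd_left hf g)
      rw [show (fun h => f (id g * h)) = fun h => f (g * h) from rfl, ← h2]
      congr 1
      funext h
      simp [mul_assoc]
    · simp [k, hg]
  rw [e3, e1] at e2
  exact (mul_left_cancel₀ hj e2).symm

theorem no_amenable_recurrent {G : Type u} [Group G] (hG : IsCstarSimple G)
    {H : Subgroup G} (hH : IsAmenable H) (hrec : IsRecurrent H) : False := by
  classical
  obtain ⟨F, hF1, hF⟩ := isRecurrent_iff.1 hrec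
  obtain ⟨N, y, hN, hy⟩ := exists_minIdeal G
  have hyN := extremePoints_subset hy
  have hym := hN.mean _ hyN
  set K := stab y with hKdef
  have hK : IsAmenable K := stab_amenable hym
  let s : G ⧸ K → G := Quotient.out
  have hmk : ∀ ω : G ⧸ K, ((s ω : G) : G ⧸ K) = ω := fun ω => Quotient.out_eq ω
  have hmkg : ∀ (g : G) (ω : G ⧸ K), ((g * s ω : G) : G ⧸ K) = g • ω := by
    intro g ω
    conv_rhs => rw [← hmk ω]
    rfl
  have htr : ∀ a b : G, (a : G ⧸ K) = (b : G ⧸ K) ↔ tr a y = tr b y := by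
    intro a b
    rw [QuotientGroup.eq, hKdef, mem_stab, tr_mul]
    constructor
    · intro h
      rw [← h, ← tr_mul, mul_inv_cancel, tr_one]
      exact h.symm ▸ rfl
    · intro h
      rw [← h, ← tr_mul, inv_mul_cancel, tr_one]
  have heq : ∀ g ω, tr (s (g • ω)) y = tr g (tr (s ω) y) := by
    intro g ω
    rw [← tr_mul, ← htr, hmk, hmkg]
  have hfix : ∀ g (ω : G ⧸ K), g • ω = ω ↔ tr g (tr (s ω) y) = tr (s ω) y := by
    intro g ω
    rw [← tr_mul, ← htr, hmk, hmkg]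
  have hcov : ∀ ω : G ⧸ K, ∃ i ∈ F, i • ω = ω := by
    intro ω
    obtain ⟨i, hi, h⟩ := fixed_of_recurrent hH hF hN (hN.tr_ext (s ω) hy)
    exact ⟨i, hi, (hfix i ω).2 h⟩
  obtain ⟨F', hF'⟩ := exists_minimal_of_wellFoundedLT
    (fun S : Finset G => S ⊆ F ∧ ∀ ω : G ⧸ K, ∃ i ∈ S, i • ω = ω) ⟨F, subset_rfl, hcov⟩
  obtain ⟨⟨hsub, hcov'⟩, hmin⟩ := hF'
  obtain ⟨i, hiF', -⟩ := hcov' ((1 : G) : G ⧸ K)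
  have hi1 : i ≠ 1 := fun h => hF1 (h ▸ hsub hiF')
  obtain ⟨ω₀, hω₀⟩ : ∃ ω₀ : G ⧸ K, ∀ j ∈ F'.erase i, j • ω₀ ≠ ω₀ := by
    by_contra hcon
    push Not at hcon
    have := hmin ⟨(Finset.erase_subset i F').trans hsub, hcon⟩ (Finset.erase_subset i F')
    exact Finset.notMem_erase i F' (this hiF')
  obtain ⟨π, hπ⟩ := exists_perm (G := G) (G ⧸ K)
  obtain ⟨M, hM, hMf⟩ := exists_cov hπ
  let W : Submodule ℂ (ℓ²(G ⧸ K, ℂ) →L[ℂ] ℓ²(G ⧸ K, ℂ)) := Submodule.span ℂ (π '' {g | g ≠ 1})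
  have hys := hN.tr_ext (s ω₀) hy
  obtain ⟨ψ, hψ, hψW, hψM, -⟩ := key_lemma hM hN hys s hyN
    (by
      intro g ω f _
      exact congrFun (heq g ω) f)
    W (fun w hw => dist_span hG hK hπ hw) (by
      intro g w hw
      induction hw using Submodule.span_induction with
      | mem x hx =>
        obtain ⟨h, hh, rfl⟩ := hx
        rw [hπ.star_eq, ← hπ.mul, ← hπ.mul]
        refine Submodule.subset_span ⟨_, ?_, rfl⟩
        intro he
        apply hh
        have : h = g * (g⁻¹ * h * g) * g⁻¹ := by group
        rw [this, he]; group
      | zero => rw [mul_zero, zero_mul]; exact zero_mem _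
      | add a b _ _ ha hb => rw [mul_add, add_mul]; exact add_mem ha hb
      | smul c a _ ha => rw [mul_smul_comm, smul_mul_assoc]; exact Submodule.smul_mem _ _ ha)
  have hprod : ∀ S : Finset G, (∀ j ∈ S, j • ω₀ ≠ ω₀) → ∃ k : G ⧸ K → ℝ, Bd k ∧
      (∀ ω, ∀ j ∈ S, j • ω = ω → k ω = 0) ∧ ∃ r : ℝ, r ≠ 0 ∧ ∀ x, ψ (x * M k) = r * ψ x := by
    intro S
    induction S using Finset.induction_on with
    | empty =>
      intro _
      refine ⟨fun _ => 1, Bd.const 1, by simp, 1, one_ne_zero, fun x => ?_⟩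
      rw [hM.one, mul_one, one_mul]
    | insert j S hj ih =>
      intro hS
      obtain ⟨k, hk, hk0, r, hr, hψk⟩ := ih fun j' hj' => hS j' (Finset.mem_insert_of_mem hj')
      have hne : tr j (tr (s ω₀) y) ≠ tr (s ω₀) y := fun h =>
        hS j (Finset.mem_insert_self j S) ((hfix j ω₀).2 h)
      obtain ⟨f, hf, hfne⟩ : ∃ f, Bd f ∧ tr j (tr (s ω₀) y) f ≠ tr (s ω₀) y f := by
        by_contra hcon
        push Not at hcon
        exact hne (mean_ext (hN.mean _ (hN.tr_mem _ (hN.tr_mem _ hyN)))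
          (hN.mean _ (hN.tr_mem _ hyN)) hcon)
      let v : G → ℝ := fun h => f h - f (j * h)
      have hv : Bd v := hf.sub (bd_left hf j)
      have hPv := bd_poisson hym s hv
      have hyv : tr (s ω₀) y v = tr (s ω₀) y f - tr j (tr (s ω₀) y) f :=
        (hN.mean _ (hN.tr_mem _ hyN)).sub hf (bd_left hf j)
      refine ⟨fun ω => y (fun h => v (s ω * h)) * k ω, hPv.mul hk, ?_,
        r * tr (s ω₀) y v, mul_ne_zero hr ?_, fun x => ?_⟩
      · intro ω j' hj' hjω
        show y (fun h => v (s ω * h)) * k ω = 0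
        rcases Finset.mem_insert.1 hj' with rfl | hj'
        · have e : y (fun h => v (s ω * h)) = tr (s ω) y f - tr j' (tr (s ω) y) f :=
            (hN.mean _ (hN.tr_mem (s ω) hyN)).sub hf (bd_left hf j')
          rw [e, (hfix j' ω).1 hjω, sub_self, zero_mul]
        · rw [hk0 ω j' hj' hjω, mul_zero]
      · rw [hyv]
        exact sub_ne_zero.2 hfne.symm
      · rw [hM.mul _ _ hPv hk, ← mul_assoc, hψk, hψM v hv, mul_assoc]
  obtain ⟨k, hk, hk0, r, hr, hψk⟩ := hprod (F'.erase i) hω₀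
  have hk0' : ∀ ω, i • ω ≠ ω → k ω = 0 := by
    intro ω hω
    obtain ⟨j, hj, hjω⟩ := hcov' ω
    refine hk0 ω j (Finset.mem_erase.2 ⟨?_, hj⟩) hjω
    rintro rfl
    exact hω hjω
  have hπM : π i * M k = M k := by
    refine ContinuousLinearMap.ext fun f => ?_
    ext ω
    rw [mul_apply_eq_comp, hπ, hMf k hk, hMf k hk]
    by_cases hω : i • ω = ω
    · rw [inv_smul_eq_iff.2 hω.symm]
    · rw [hk0' ω hω, hk0']
      · simp
      · rw [smul_inv_smul]
        intro h
        exact hω (by conv_lhs => rw [h, smul_inv_smul])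
  have h1 := hψk (π i)
  have h2 := hψk 1
  rw [hπM, hψW _ (Submodule.subset_span ⟨i, hi1, rfl⟩)] at h1
  rw [one_mul, h1, hψ.one] at h2
  simp at h2
  exact hr h2.symm

end Forward

/-- **Theorem (Kennedy).** A discrete group is C*-simple if and only if it has no subgroup
that is both amenable and recurrent. -/
theorem cstarSimple_iff_no_amenable_recurrent_subgroup (G : Type u) [Group G] :
    IsCstarSimple G ↔ ¬ ∃ H : Subgroup G, IsAmenable H ∧ IsRecurrent H := by
  refine ⟨?_, cstarSimple_of⟩
  rintro hG ⟨H, hH, hrec⟩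
  exact no_amenable_recurrent hG hH hrec
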